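/- arXiv:1611.08204 — 10 statements merged into one kernel-verified Lean document; each statement's English description precedes it below -/
import Mathlib

section
/- For every t ∈ ZMod 5, the set D'_t = {(x,y) ∈ ℤ × ℤ : 2x + y ≡ t (mod 5)} is a perfect dominating set of the infinite grid: for every vertex v ∈ ℤ × ℤ, exactly one element of the closed neighborhood N[v] belongs to D'_t. -/
/-!
The linear form `2x + y` takes the values `0, 1, 2, -2, -1` on the five offsets
`(0,0), (0,1), (1,0), (-1,0), (0,-1)` from a vertex to the members of its closed neighborhood.
These are the five residues mod 5, once each (`nbrOffset_form`), so for each `v` exactly one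
offset changes the value at `v` into the prescribed residue `t`.
-/

/-- Adjacency in the infinite grid on `ℤ × ℤ`. -/
def InfGridAdj (v w : ℤ × ℤ) : Prop := |v.1 - w.1| + |v.2 - w.2| = 1

/-- The closed neighborhood of a vertex of the infinite grid. -/
def ClosedNbhd (v : ℤ × ℤ) : Set (ℤ × ℤ) := {u | u = v ∨ InfGridAdj v u}

/-- The diagonal dominating set `D_t = {(x,y) : x + 2y ≡ t (mod 5)}`. -/
def Dset (t : ZMod 5) : Set (ℤ × ℤ) :=
  {p | (p.1 : ZMod 5) + 2 * (p.2 : ZMod 5) = t}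

/-- The diagonal dominating set `D'_t = {(x,y) : 2x + y ≡ t (mod 5)}`. -/
def Dset' (t : ZMod 5) : Set (ℤ × ℤ) :=
  {p | 2 * (p.1 : ZMod 5) + (p.2 : ZMod 5) = t}

/-- The five offsets from a vertex to its closed neighborhood, indexed so that `2x + y` takes the
value `d` modulo 5 on the offset `nbrOffset d`. -/
def nbrOffset : ZMod 5 → ℤ × ℤ := ![(0, 0), (0, 1), (1, 0), (-1, 0), (0, -1)]

theorem nbrOffset_form (d : ZMod 5) :
    2 * ((nbrOffset d).1 : ZMod 5) + ((nbrOffset d).2 : ZMod 5) = d := by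
  revert d; decide

theorem mem_closedNbhd_iff (v u : ℤ × ℤ) :
    u ∈ ClosedNbhd v ↔ ∃ d : ZMod 5, u = v + nbrOffset d := by
  obtain ⟨x, y⟩ := v
  obtain ⟨a, b⟩ := u
  -- `ZMod 5` unfolds to `Fin 5`, over which the existential can be expanded.
  have h5 : (∃ d : ZMod 5, (a, b) = (x, y) + nbrOffset d) ↔
      ∃ d : Fin 5, (a, b) = (x, y) +
        (![(0, 0), (0, 1), (1, 0), (-1, 0), (0, -1)] : Fin 5 → ℤ × ℤ) d := Iff.rfl
  rw [h5]
  simp only [ClosedNbhd, InfGridAdj, Set.mem_ofPred_eq, Fin.exists_fin_succ, Prod.mk.injEq]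
  simp
  rcases abs_cases (x - a) with h | h <;> rcases abs_cases (y - b) with h' | h' <;> omega

theorem add_nbrOffset_mem_Dset' (t : ZMod 5) (v : ℤ × ℤ) (d : ZMod 5) :
    v + nbrOffset d ∈ Dset' t ↔ d = t - (2 * (v.1 : ZMod 5) + (v.2 : ZMod 5)) := by
  have h := nbrOffset_form d
  simp only [Dset', Set.mem_ofPred_eq, Prod.fst_add, Prod.snd_add, Int.cast_add]
  constructor <;> intro h'
  · linear_combination h' - h
  · linear_combination h' + h

/-- For every `t`, `D'_t` is a perfect dominating set of the infinite grid:
every vertex has exactly one element of its closed neighborhood in `D'_t`. -/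
theorem Dset'_perfect_dominating (t : ZMod 5) :
    ∀ v : ℤ × ℤ, ∃! u : ℤ × ℤ, u ∈ ClosedNbhd v ∧ u ∈ Dset' t := by
  intro v
  refine ⟨v + nbrOffset (t - (2 * (v.1 : ZMod 5) + (v.2 : ZMod 5))),
    ⟨(mem_closedNbhd_iff _ _).2 ⟨_, rfl⟩, (add_nbrOffset_mem_Dset' t v _).2 rfl⟩, ?_⟩
  rintro u ⟨hu, hut⟩
  obtain ⟨d, rfl⟩ := (mem_closedNbhd_iff v u).1 hu
  rw [← (add_nbrOffset_mem_Dset' t v d).1 hut]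
end

section
/- (Rotate-Square step, from a D_t placement.) For every t ∈ ZMod 5 and every vertex a ∈ ℤ × ℤ with a ∉ D_t, there exist t' ∈ ZMod 5 and a bijection σ from D_t onto D'_{t'} such that σ(v) ∈ N[v] for every v ∈ D_t (each guard moves to its own position or to an adjacent position) and a ∈ D'_{t'} (the attacked vertex is occupied after the move). -/
/-- The move of a guard whose position satisfies `2x + y = t' + s`: the unique step among
`(0,0), (±1,0), (0,±1)` that changes `2x + y` by `-s` modulo 5. -/
def rotMove (s : ZMod 5) : ℤ × ℤ :=
  if s = 1 then (0, -1) else if s = 2 then (-1, 0) else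
  if s = 3 then (1, 0) else if s = 4 then (0, 1) else (0, 0)

/-- The same for `D_t`: the unique step of length at most one that changes `x + 2y` by `-r`
modulo 5. -/
def rotMoveBack (r : ZMod 5) : ℤ × ℤ :=
  if r = 1 then (-1, 0) else if r = 2 then (0, -1) else
  if r = 3 then (0, 1) else if r = 4 then (1, 0) else (0, 0)

lemma rotMove_shift : ∀ s : ZMod 5,
    2 * ((rotMove s).1 : ZMod 5) + ((rotMove s).2 : ZMod 5) = -s := by decide

lemma rotMoveBack_shift : ∀ r : ZMod 5,
    ((rotMoveBack r).1 : ZMod 5) + 2 * ((rotMoveBack r).2 : ZMod 5) = -r := by decide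

/-- A guard leaving `D_t` along `rotMove s` is brought back by `rotMoveBack`. -/
lemma rotMoveBack_rotMove : ∀ s : ZMod 5,
    rotMove s + rotMoveBack
      (((rotMove s).1 : ZMod 5) + 2 * ((rotMove s).2 : ZMod 5)) = 0 := by decide

lemma rotMove_rotMoveBack : ∀ r : ZMod 5,
    rotMoveBack r + rotMove
      (2 * ((rotMoveBack r).1 : ZMod 5) + ((rotMoveBack r).2 : ZMod 5)) = 0 := by decide

lemma rotMove_length : ∀ s : ZMod 5,
    rotMove s = 0 ∨ |(rotMove s).1| + |(rotMove s).2| = 1 := by decide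

lemma add_rotMove_mem_closedNbhd (v : ℤ × ℤ) (s : ZMod 5) :
    v + rotMove s ∈ ClosedNbhd v := by
  rcases rotMove_length s with h | h
  · exact Or.inl (by rw [h, add_zero])
  · refine Or.inr ?_
    simpa [InfGridAdj] using h

/-- Rotate-Square step from a `D_t` placement: any attack on an unoccupied vertex
can be defended, moving each guard within its closed neighborhood, reaching a
`D'_{t'}` placement that contains the attacked vertex. -/
theorem rotateSquare_step_Dset (t : ZMod 5) (a : ℤ × ℤ) (ha : a ∉ Dset t) :
    ∃ t' : ZMod 5, ∃ σ : ℤ × ℤ → ℤ × ℤ,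
      Set.BijOn σ (Dset t) (Dset' t') ∧
      (∀ v ∈ Dset t, σ v ∈ ClosedNbhd v) ∧
      a ∈ Dset' t' := by
  set t' : ZMod 5 := 2 * (a.1 : ZMod 5) + (a.2 : ZMod 5)
  refine ⟨t', fun v => v + rotMove (2 * (v.1 : ZMod 5) + (v.2 : ZMod 5) - t'), ?_,
    fun v _ => add_rotMove_mem_closedNbhd v _, rfl⟩
  refine Set.InvOn.bijOn
    (f' := fun p => p + rotMoveBack ((p.1 : ZMod 5) + 2 * (p.2 : ZMod 5) - t))
    ⟨fun v hv => ?_, fun p hp => ?_⟩ (fun v _ => ?_) (fun p _ => ?_)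
  · have hv' : (v.1 : ZMod 5) + 2 * (v.2 : ZMod 5) = t := hv
    -- As `v ∈ D_t`, the residue of `x + 2y - t` after the move is that of the step alone.
    dsimp only
    generalize 2 * (v.1 : ZMod 5) + (v.2 : ZMod 5) - t' = s
    have e : (((v + rotMove s).1 : ℤ) : ZMod 5) + 2 * (((v + rotMove s).2 : ℤ) : ZMod 5) - t
        = ((rotMove s).1 : ZMod 5) + 2 * ((rotMove s).2 : ZMod 5) := by
      rw [Prod.fst_add, Prod.snd_add]
      push_cast
      linear_combination hv'
    rw [e, add_assoc, rotMoveBack_rotMove, add_zero]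
  · have hp' : 2 * (p.1 : ZMod 5) + (p.2 : ZMod 5) = t' := hp
    dsimp only
    generalize (p.1 : ZMod 5) + 2 * (p.2 : ZMod 5) - t = r
    have e : 2 * (((p + rotMoveBack r).1 : ℤ) : ZMod 5)
        + (((p + rotMoveBack r).2 : ℤ) : ZMod 5) - t'
        = 2 * ((rotMoveBack r).1 : ZMod 5) + ((rotMoveBack r).2 : ZMod 5) := by
      rw [Prod.fst_add, Prod.snd_add]
      push_cast
      linear_combination hp'
    rw [e, add_assoc, rotMove_rotMoveBack, add_zero]
  · have h := rotMove_shift (2 * (v.1 : ZMod 5) + (v.2 : ZMod 5) - t')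
    simp only [Dset', Set.mem_ofPred_eq, Prod.fst_add, Prod.snd_add]
    push_cast
    linear_combination h
  · have h := rotMoveBack_shift ((p.1 : ZMod 5) + 2 * (p.2 : ZMod 5) - t)
    simp only [Dset, Set.mem_ofPred_eq, Prod.fst_add, Prod.snd_add]
    push_cast
    linear_combination h
end

section
/- (Rotate-Square step, from a D'_t placement.) For every t ∈ ZMod 5 and every vertex a ∈ ℤ × ℤ with a ∉ D'_t, there exist t' ∈ ZMod 5 and a bijection σ from D'_t onto D_{t'} such that σ(v) ∈ N[v] for every v ∈ D'_t (each guard moves to its own position or to an adjacent position) and a ∈ D_{t'} (the attacked vertex is occupied after the move). -/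
/-- The unique vector `d` among `0, ±(1,0), ±(0,1)` with `d.1 + 2 * d.2 = c` in `ZMod 5`.
By symmetry, `(gridStep c).swap` is the unique one with `2 * d.1 + d.2 = c`. -/
def gridStep (c : ZMod 5) : ℤ × ℤ :=
  if c = 1 then (1, 0) else if c = 2 then (0, 1) else
  if c = 3 then (0, -1) else if c = 4 then (-1, 0) else (0, 0)

lemma gridStep_spec (c : ZMod 5) :
    ((gridStep c).1 : ZMod 5) + 2 * ((gridStep c).2 : ZMod 5) = c := by
  revert c; decide

lemma gridStep_unit (c : ZMod 5) :
    gridStep c = 0 ∨ |(gridStep c).1| + |(gridStep c).2| = 1 := by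
  revert c; decide

/-- The step of the swapped kind that undoes the change of `2x + y` caused by `gridStep c` is
`-gridStep c`; this is why the two nearest-vertex maps are mutually inverse. -/
lemma swap_gridStep_neg (c : ZMod 5) :
    (gridStep (-(2 * ((gridStep c).1 : ZMod 5) + ((gridStep c).2 : ZMod 5)))).swap
      = -gridStep c := by
  revert c; decide

/-- Moves a vertex to the unique vertex of `D_{t}` in its closed neighborhood. -/
def toDset (t : ZMod 5) (v : ℤ × ℤ) : ℤ × ℤ :=
  v + gridStep (t - ((v.1 : ZMod 5) + 2 * (v.2 : ZMod 5)))

/-- Moves a vertex to the unique vertex of `D'_{t}` in its closed neighborhood, as the conjugate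
of `toDset` by the coordinate swap. -/
def toDset' (t : ZMod 5) (v : ℤ × ℤ) : ℤ × ℤ := (toDset t v.swap).swap

lemma toDset_mem (t : ZMod 5) (v : ℤ × ℤ) : toDset t v ∈ Dset t := by
  have h := gridStep_spec (t - ((v.1 : ZMod 5) + 2 * (v.2 : ZMod 5)))
  simp only [Dset, toDset, Set.mem_ofPred_eq, Prod.fst_add, Prod.snd_add, Int.cast_add]
  linear_combination h

lemma swap_mem_Dset' {t : ZMod 5} {v : ℤ × ℤ} : v.swap ∈ Dset' t ↔ v ∈ Dset t := by
  simp [Dset, Dset', add_comm]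

lemma toDset_mem_closedNbhd (t : ZMod 5) (v : ℤ × ℤ) : toDset t v ∈ ClosedNbhd v := by
  rcases gridStep_unit (t - ((v.1 : ZMod 5) + 2 * (v.2 : ZMod 5))) with h | h
  · left
    simp [toDset, h]
  · right
    simpa [InfGridAdj, toDset] using h

lemma toDset'_toDset (t t' : ZMod 5) {v : ℤ × ℤ} (hv : v ∈ Dset' t) :
    toDset' t (toDset t' v) = v := by
  have hv' : 2 * (v.1 : ZMod 5) + (v.2 : ZMod 5) = t := hv
  set c := t' - ((v.1 : ZMod 5) + 2 * (v.2 : ZMod 5)) with hc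
  have hu : toDset t' v = v + gridStep c := rfl
  have key : t - (((v + gridStep c).2 : ZMod 5) + 2 * ((v + gridStep c).1 : ZMod 5))
      = -(2 * ((gridStep c).1 : ZMod 5) + ((gridStep c).2 : ZMod 5)) := by
    simp only [Prod.fst_add, Prod.snd_add, Int.cast_add]
    linear_combination -hv'
  rw [hu, toDset', toDset, Prod.fst_swap, Prod.snd_swap, key, Prod.swap_add, Prod.swap_swap,
    swap_gridStep_neg, add_neg_cancel_right]

lemma toDset_toDset' (t t' : ZMod 5) {u : ℤ × ℤ} (hu : u ∈ Dset t') :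
    toDset t' (toDset' t u) = u := by
  -- This is `toDset'_toDset` applied to `u.swap`, conjugated by the coordinate swap.
  have h := toDset'_toDset t' t (swap_mem_Dset'.2 hu)
  rw [← Prod.swap_inj]
  exact h

/-- Rotate-Square step from a `D'_t` placement: any attack on an unoccupied vertex
can be defended, moving each guard within its closed neighborhood, reaching a
`D_{t'}` placement that contains the attacked vertex. -/
theorem rotateSquare_step_Dset' (t : ZMod 5) (a : ℤ × ℤ) (ha : a ∉ Dset' t) :
    ∃ t' : ZMod 5, ∃ σ : ℤ × ℤ → ℤ × ℤ,
      Set.BijOn σ (Dset' t) (Dset t') ∧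
      (∀ v ∈ Dset' t, σ v ∈ ClosedNbhd v) ∧
      a ∈ Dset t' := by
  refine ⟨(a.1 : ZMod 5) + 2 * (a.2 : ZMod 5), toDset ((a.1 : ZMod 5) + 2 * (a.2 : ZMod 5)), ?_,
    fun v _ => toDset_mem_closedNbhd _ v, rfl⟩
  exact Set.InvOn.bijOn (f' := toDset' t)
    ⟨fun v hv => toDset'_toDset t _ hv, fun u hu => toDset_toDset' t _ hu⟩
    (fun v _ => toDset_mem _ v) (fun u _ => swap_mem_Dset'.2 (toDset_mem t u.swap))
end

section
/- (Eternal domination of the infinite grid.) Let 𝒟 denote the collection of all sets D_t and D'_t for t ∈ ZMod 5. For every attack sequence a : ℕ → ℤ × ℤ and every starting placement S₀ ∈ 𝒟, there exists a sequence of sets S : ℕ → Set (ℤ × ℤ) with S 0 = S₀ such that for every n: (i) S n ∈ 𝒟 (in particular S n is a dominating set of the infinite grid); (ii) if a n ∈ S n then S (n+1) = S n; and (iii) if a n ∉ S n then a n ∈ S (n+1) and there is a bijection σ from S n onto S (n+1) with σ(v) ∈ N[v] for every v ∈ S n. -/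
theorem mem_closedNbhd_add {e : ℤ × ℤ} (he : e ∈ ClosedNbhd 0) (v : ℤ × ℤ) :
    v + e ∈ ClosedNbhd v := by
  rcases he with rfl | he
  · exact Or.inl (add_zero v)
  · right
    simpa [InfGridAdj] using he

/-- The additive map `(x, y) ↦ c x + d y` to `ZMod 5`. -/
def residueHom (c d : ZMod 5) : ℤ × ℤ →+ ZMod 5 where
  toFun p := c * (p.1 : ZMod 5) + d * (p.2 : ZMod 5)
  map_zero' := by simp
  map_add' p q := by
    simp only [Prod.fst_add, Prod.snd_add, Int.cast_add]
    ring

theorem residueHom_one_two_surj (r : ZMod 5) : ∃ e ∈ ClosedNbhd 0, residueHom 1 2 e = r := by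
  fin_cases r
  · exact ⟨(0, 0), by simp [ClosedNbhd], rfl⟩
  · exact ⟨(1, 0), by simp [ClosedNbhd, InfGridAdj], rfl⟩
  · exact ⟨(0, 1), by simp [ClosedNbhd, InfGridAdj], rfl⟩
  · exact ⟨(0, -1), by simp [ClosedNbhd, InfGridAdj], rfl⟩
  · exact ⟨(-1, 0), by simp [ClosedNbhd, InfGridAdj], rfl⟩

theorem residueHom_two_one_surj (r : ZMod 5) : ∃ e ∈ ClosedNbhd 0, residueHom 2 1 e = r := by
  fin_cases r
  · exact ⟨(0, 0), by simp [ClosedNbhd], rfl⟩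
  · exact ⟨(0, 1), by simp [ClosedNbhd, InfGridAdj], rfl⟩
  · exact ⟨(1, 0), by simp [ClosedNbhd, InfGridAdj], rfl⟩
  · exact ⟨(-1, 0), by simp [ClosedNbhd, InfGridAdj], rfl⟩
  · exact ⟨(0, -1), by simp [ClosedNbhd, InfGridAdj], rfl⟩

theorem Dset_eq_fiber (t : ZMod 5) : Dset t = {p | residueHom 1 2 p = t} := by
  ext p
  simp [Dset, residueHom]

theorem Dset'_eq_fiber (t : ZMod 5) : Dset' t = {p | residueHom 2 1 p = t} := by
  ext p
  simp [Dset', residueHom]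

/-- If an additive map to `ZMod 5` is onto already on the closed neighborhood of the origin, then
its fibres are dominating and the guards can defend forever while always occupying a fibre. -/
theorem exists_defense_of_surj (f : ℤ × ℤ →+ ZMod 5) (hf : ∀ r, ∃ e ∈ ClosedNbhd 0, f e = r)
    (a : ℕ → ℤ × ℤ) (t : ZMod 5) :
    ∃ τ : ℕ → ZMod 5, τ 0 = t ∧ ∀ n : ℕ,
      (∀ v : ℤ × ℤ, ∃ u ∈ {p | f p = τ n}, u ∈ ClosedNbhd v) ∧
      (a n ∈ {p | f p = τ n} → {p | f p = τ (n + 1)} = {p | f p = τ n}) ∧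
      (a n ∉ {p | f p = τ n} → a n ∈ {p | f p = τ (n + 1)} ∧
        ∃ σ : ℤ × ℤ → ℤ × ℤ, Set.BijOn σ {p | f p = τ n} {p | f p = τ (n + 1)} ∧
          ∀ v ∈ {p | f p = τ n}, σ v ∈ ClosedNbhd v) := by
  obtain ⟨τ, h0, hs⟩ : ∃ τ : ℕ → ZMod 5, τ 0 = t ∧ ∀ n, τ (n + 1) = f (a n) :=
    ⟨fun n => Nat.casesOn n t fun k => f (a k), rfl, fun _ => rfl⟩
  refine ⟨τ, h0, fun n => ?_⟩
  rw [hs]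
  generalize τ n = s
  refine ⟨fun v => ?_, fun h => ?_, fun _ => ⟨rfl, ?_⟩⟩
  · obtain ⟨e, he, hfe⟩ := hf (s - f v)
    exact ⟨v + e, by simp [hfe], mem_closedNbhd_add he v⟩
  · change f (a n) = s at h
    simp [h]
  · obtain ⟨e, he, hfe⟩ := hf (f (a n) - s)
    refine ⟨fun v => v + e, ⟨fun v hv => ?_, (add_left_injective e).injOn, fun w hw => ?_⟩,
      fun v _ => mem_closedNbhd_add he v⟩
    · change f v = s at hv
      simp [hv, hfe]
    · change f w = f (a n) at hw
      exact ⟨w - e, by simp [hw, hfe], sub_add_cancel w e⟩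

/-- Eternal domination of the infinite grid: starting from any placement in the
collection `𝒟 = {D_t} ∪ {D'_t}`, the guards can defend against any infinite
sequence of attacks, staying in `𝒟` (in particular, dominating) at all times. -/
theorem eternal_domination_infinite_grid (a : ℕ → ℤ × ℤ) (S₀ : Set (ℤ × ℤ))
    (hS₀ : (∃ t : ZMod 5, S₀ = Dset t) ∨ (∃ t : ZMod 5, S₀ = Dset' t)) :
    ∃ S : ℕ → Set (ℤ × ℤ), S 0 = S₀ ∧ ∀ n : ℕ,
      (((∃ t : ZMod 5, S n = Dset t) ∨ (∃ t : ZMod 5, S n = Dset' t)) ∧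
        (∀ v : ℤ × ℤ, ∃ u ∈ S n, u ∈ ClosedNbhd v)) ∧
      (a n ∈ S n → S (n + 1) = S n) ∧
      (a n ∉ S n → a n ∈ S (n + 1) ∧
        ∃ σ : ℤ × ℤ → ℤ × ℤ, Set.BijOn σ (S n) (S (n + 1)) ∧
          ∀ v ∈ S n, σ v ∈ ClosedNbhd v) := by
  rcases hS₀ with ⟨t, rfl⟩ | ⟨t, rfl⟩
  · obtain ⟨τ, h0, hτ⟩ := exists_defense_of_surj _ residueHom_one_two_surj a t
    refine ⟨fun n => Dset (τ n), by simp only [h0], fun n => ?_⟩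
    obtain ⟨h1, h2⟩ := hτ n
    simp only [← Dset_eq_fiber] at h1 h2
    exact ⟨⟨Or.inl ⟨_, rfl⟩, h1⟩, h2⟩
  · obtain ⟨τ, h0, hτ⟩ := exists_defense_of_surj _ residueHom_two_one_surj a t
    refine ⟨fun n => Dset' (τ n), by simp only [h0], fun n => ?_⟩
    obtain ⟨h1, h2⟩ := hτ n
    simp only [← Dset'_eq_fiber] at h1 h2
    exact ⟨⟨Or.inr ⟨_, rfl⟩, h1⟩, h2⟩
end

section
/- For all positive integers m, n and every t ∈ ZMod 5, the number of pairs (x,y) with 0 ≤ x < m, 0 ≤ y < n and x + 2y ≡ t (mod 5) is at least ⌊mn/5⌋ and at most ⌈mn/5⌉. -/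
/-!
Any five consecutive integers represent each class modulo `5` exactly once, and so do five
consecutive even integers. Hence lengthening a side of the `m × n` box by `5` raises the count by
exactly the other side, i.e. by exactly the increase of `m * n / 5`
(`boxCount_add_five_left`, `boxCount_add_five_right`). Writing `m = 5a + r`, `n = 5b + s` with
`r, s < 5`, both bounds reduce to those of the `r × s` box, and these finitely many cases are
checked directly (`boxCount_small`).
-/

/-- The number of `(x, y)` with `x < m`, `y < n` and `x + 2y = t` in `ZMod 5`, encoded as a sum of
indicators so that rows and columns can be split off. -/
def boxCount (m n : ℕ) (t : ZMod 5) : ℕ :=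
  ∑ x ∈ Finset.range m, ∑ y ∈ Finset.range n,
    if (x : ZMod 5) + 2 * (y : ZMod 5) = t then 1 else 0

lemma card_eq_boxCount (m n : ℕ) (t : ZMod 5) :
    ((Finset.range m ×ˢ Finset.range n).filter
        (fun p => ((p.1 : ZMod 5) + 2 * (p.2 : ZMod 5) = t))).card = boxCount m n t := by
  rw [Finset.card_filter, Finset.sum_product]
  rfl

lemma boxCount_add_five_left (m n : ℕ) (t : ZMod 5) :
    boxCount (m + 5) n t = boxCount m n t + n := by
  have key : ∀ a b t : ZMod 5, (if a + b = t then 1 else 0) + (if a + 1 + b = t then 1 else 0)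
      + (if a + 2 + b = t then 1 else 0) + (if a + 3 + b = t then 1 else 0)
      + (if a + 4 + b = t then 1 else 0) = 1 := by decide
  unfold boxCount
  simp only [Finset.sum_range_succ _ (m + _), Finset.sum_range_succ _ m]
  simp only [add_assoc (∑ x ∈ Finset.range m, _), ← Finset.sum_add_distrib]
  congr 1
  push_cast
  simp [key]

lemma boxCount_add_five_right (m n : ℕ) (t : ZMod 5) :
    boxCount m (n + 5) t = boxCount m n t + m := by
  have key : ∀ a b t : ZMod 5, (if a + 2 * b = t then 1 else 0)
      + (if a + 2 * (b + 1) = t then 1 else 0)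
      + (if a + 2 * (b + 2) = t then 1 else 0) + (if a + 2 * (b + 3) = t then 1 else 0)
      + (if a + 2 * (b + 4) = t then 1 else 0) = 1 := by decide
  have row : ∀ x : ℕ, (∑ y ∈ Finset.range (n + 5),
      if (x : ZMod 5) + 2 * (y : ZMod 5) = t then 1 else 0) =
      (∑ y ∈ Finset.range n, if (x : ZMod 5) + 2 * (y : ZMod 5) = t then 1 else 0) + 1 := by
    intro x
    have h := key x n t
    simp only [Finset.sum_range_succ _ (n + _), Finset.sum_range_succ _ n]
    push_cast
    omega
  simp [boxCount, row, Finset.sum_add_distrib]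

lemma boxCount_left (a r n : ℕ) (t : ZMod 5) :
    boxCount (r + 5 * a) n t = boxCount r n t + a * n := by
  induction a with
  | zero => simp
  | succ a ih => rw [Nat.mul_succ, ← add_assoc, boxCount_add_five_left, ih]; ring

lemma boxCount_right (b m s : ℕ) (t : ZMod 5) :
    boxCount m (s + 5 * b) t = boxCount m s t + b * m := by
  induction b with
  | zero => simp
  | succ b ih => rw [Nat.mul_succ, ← add_assoc, boxCount_add_five_right, ih]; ring

lemma boxCount_small : ∀ r < 5, ∀ s < 5, ∀ t : ZMod 5,
    r * s / 5 ≤ boxCount r s t ∧ boxCount r s t ≤ (r * s + 4) / 5 := by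
  decide +kernel

/-- Chang's counting lemma, first part: for all `m, n ≥ 1` and every `t : ZMod 5`,
the number of pairs `(x, y)` with `0 ≤ x < m`, `0 ≤ y < n` and
`x + 2y ≡ t (mod 5)` is between `⌊mn/5⌋` and `⌈mn/5⌉`. -/
theorem Vt_card_bounds (m n : ℕ) (hm : 0 < m) (hn : 0 < n) (t : ZMod 5) :
    m * n / 5 ≤
      ((Finset.range m ×ˢ Finset.range n).filter
        (fun p => ((p.1 : ZMod 5) + 2 * (p.2 : ZMod 5) = t))).card ∧
    ((Finset.range m ×ˢ Finset.range n).filter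
        (fun p => ((p.1 : ZMod 5) + 2 * (p.2 : ZMod 5) = t))).card ≤
      (m * n + 4) / 5 := by
  rw [card_eq_boxCount]
  obtain ⟨a, r, hr, rfl⟩ : ∃ a r, r < 5 ∧ m = r + 5 * a := ⟨m / 5, m % 5, by omega, by omega⟩
  obtain ⟨b, s, hs, rfl⟩ : ∃ b s, s < 5 ∧ n = s + 5 * b := ⟨n / 5, n % 5, by omega, by omega⟩
  rw [boxCount_left, boxCount_right]
  have h := boxCount_small r hr s hs t
  have e : (r + 5 * a) * (s + 5 * b) = r * s + 5 * (b * r + a * (s + 5 * b)) := by ring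
  rw [e]
  omega
end

section
/- For all positive integers m, n there exist t₀, t₁ ∈ ZMod 5 such that the number of pairs (x,y) with 0 ≤ x < m, 0 ≤ y < n and x + 2y ≡ t₀ (mod 5) equals ⌊mn/5⌋, and the number of pairs (x,y) with 0 ≤ x < m, 0 ≤ y < n and x + 2y ≡ t₁ (mod 5) equals ⌈mn/5⌉. -/
/-!
Among five consecutive values of `x` (with `y` fixed), or of `y` (with `x` fixed, since `2` is
invertible modulo `5`), the form `x + 2y` takes every residue modulo `5` exactly once. Hence
lengthening one side of the rectangle by `5` raises each of the five counts by the length of the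
other side (`countV_add_five_left`, `countV_add_five_right`), and raises `⌊mn/5⌋` and `⌈mn/5⌉` by
that same amount. So residues `t₀, t₁` that work for `(m % 5, n % 5)` also work for `(m, n)`, and
the cases `m, n < 5` are a finite check.
-/

/-- The number of `(x, y)` in the box `[0, m) × [0, n)` with `x + 2y = t` in `ZMod 5`. -/
def countV (m n : ℕ) (t : ZMod 5) : ℕ :=
  ((Finset.range m ×ˢ Finset.range n).filter
    (fun p => ((p.1 : ZMod 5) + 2 * (p.2 : ZMod 5) = t))).card

lemma countV_eq_sum (m n : ℕ) (t : ZMod 5) :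
    countV m n t = ∑ x ∈ Finset.range m, ∑ y ∈ Finset.range n,
      if (x : ZMod 5) + 2 * (y : ZMod 5) = t then 1 else 0 := by
  rw [countV, Finset.card_filter, Finset.sum_product]

lemma countV_add_five_left (m n : ℕ) (t : ZMod 5) :
    countV (m + 5) n t = countV m n t + n := by
  have key : ∀ a b c : ZMod 5, (if a + 2 * b = c then 1 else 0)
      + (if a + 1 + 2 * b = c then 1 else 0) + (if a + 2 + 2 * b = c then 1 else 0)
      + (if a + 3 + 2 * b = c then 1 else 0) + (if a + 4 + 2 * b = c then 1 else 0) = 1 := by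
    decide
  simp only [countV_eq_sum, Finset.sum_range_succ _ (m + _), Finset.sum_range_succ _ m, add_assoc,
    ← Finset.sum_add_distrib]
  congr 1
  rw [Finset.sum_congr rfl (g := fun _ => 1), Finset.sum_const, Finset.card_range, smul_eq_mul,
    mul_one]
  intro y _
  refine Eq.trans ?_ (key m y t)
  push_cast
  simp only [add_assoc]

lemma countV_add_five_right (m n : ℕ) (t : ZMod 5) :
    countV m (n + 5) t = countV m n t + m := by
  have key : ∀ a b c : ZMod 5, (if a + 2 * b = c then 1 else 0)
      + (if a + 2 * (b + 1) = c then 1 else 0) + (if a + 2 * (b + 2) = c then 1 else 0)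
      + (if a + 2 * (b + 3) = c then 1 else 0) + (if a + 2 * (b + 4) = c then 1 else 0) = 1 := by
    decide
  have row : ∀ x : ℕ, (∑ y ∈ Finset.range (n + 5),
      if (x : ZMod 5) + 2 * (y : ZMod 5) = t then 1 else 0) =
      (∑ y ∈ Finset.range n, if (x : ZMod 5) + 2 * (y : ZMod 5) = t then 1 else 0) + 1 := by
    intro x
    refine Eq.trans ?_ (congrArg (_ + ·) (key x n t))
    simp only [Finset.sum_range_succ _ (n + _), Finset.sum_range_succ _ n]
    push_cast
    simp only [add_assoc]
  simp only [countV_eq_sum, row, Finset.sum_add_distrib, Finset.sum_const, Finset.card_range,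
    smul_eq_mul, mul_one]

lemma countV_add_mul_left (m n q : ℕ) (t : ZMod 5) :
    countV (m + 5 * q) n t = countV m n t + q * n := by
  induction q with
  | zero => simp
  | succ q ih => rw [mul_add, ← add_assoc, mul_one, countV_add_five_left, ih]; ring

lemma countV_add_mul_right (m n q : ℕ) (t : ZMod 5) :
    countV m (n + 5 * q) t = countV m n t + q * m := by
  induction q with
  | zero => simp
  | succ q ih => rw [mul_add, ← add_assoc, mul_one, countV_add_five_right, ih]; ring

lemma countV_extremes_of_lt_five : ∀ a < 5, ∀ b < 5, ∃ t₀ t₁ : ZMod 5,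
    countV a b t₀ = a * b / 5 ∧ countV a b t₁ = (a * b + 4) / 5 := by
  decide +kernel

/-- Chang's counting lemma, second part: for all `m, n ≥ 1` there exist
`t₀, t₁ : ZMod 5` for which the number of pairs `(x, y)` with `0 ≤ x < m`,
`0 ≤ y < n` and `x + 2y ≡ t (mod 5)` equals `⌊mn/5⌋` and `⌈mn/5⌉` respectively. -/
theorem Vt_card_extremes (m n : ℕ) (hm : 0 < m) (hn : 0 < n) :
    ∃ t₀ t₁ : ZMod 5,
      ((Finset.range m ×ˢ Finset.range n).filter
        (fun p => ((p.1 : ZMod 5) + 2 * (p.2 : ZMod 5) = t₀))).card = m * n / 5 ∧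
      ((Finset.range m ×ˢ Finset.range n).filter
        (fun p => ((p.1 : ZMod 5) + 2 * (p.2 : ZMod 5) = t₁))).card = (m * n + 4) / 5 := by
  obtain ⟨t₀, t₁, h₀, h₁⟩ := countV_extremes_of_lt_five (m % 5) (Nat.mod_lt _ (by norm_num))
    (n % 5) (Nat.mod_lt _ (by norm_num))
  refine ⟨t₀, t₁, ?_⟩
  change countV m n t₀ = _ ∧ countV m n t₁ = _
  have hcount : ∀ t, countV m n t =
      countV (m % 5) (n % 5) t + (n / 5 * (m % 5) + m / 5 * n) := by
    intro t
    conv_lhs => rw [← Nat.mod_add_div m 5, countV_add_mul_left]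
    conv_lhs => enter [1]; rw [← Nat.mod_add_div n 5, countV_add_mul_right]
    ring
  have hprod : m * n = (m % 5) * (n % 5) + 5 * (n / 5 * (m % 5) + m / 5 * n) := by
    calc m * n = (m % 5 + 5 * (m / 5)) * n := by rw [Nat.mod_add_div]
      _ = (m % 5) * n + 5 * (m / 5 * n) := by ring
      _ = (m % 5) * (n % 5 + 5 * (n / 5)) + 5 * (m / 5 * n) := by rw [Nat.mod_add_div n 5]
      _ = _ := by ring
  rw [hcount, hcount, h₀, h₁, hprod]
  generalize n / 5 * (m % 5) + m / 5 * n = k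
  generalize (m % 5) * (n % 5) = r
  omega
end

section
/- (Chang's bound.) For all integers m, n ≥ 8, there exists a dominating set of the m×n grid P_m□P_n of cardinality at most ⌊(m+2)(n+2)/5⌋ − 4. -/
/-!
Away from the boundary the optimal pattern is the perfect code `x + 2 y ≡ c (mod 5)`: five
consecutive lines of the grid, together with their share of the boundary correction, carry one
guard per column of the grid widened by one column on each side. Hence, once the four corners are
arranged well, lengthening the grid by five rows costs exactly `n + 2` guards, which is exactly the
growth of `(m + 2) (n + 2) / 5`; it remains to handle the sizes `8, …, 12` in both directions.

This is made precise by *templates*. A template for `(a, b)` is a dominating pattern on the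
`(a + 5) × (b + 5)` grid with a band of five middle rows and a band of five middle columns, such
that the pattern agrees on the last row of the band and the row before the band, and on the first
row of the band and the row after the band (and likewise for columns). Repeating the row band `k`
times and the column band `l` times then gives, for every `k, l ≥ 0`, a dominating pattern on the
`(a + 5 k) × (b + 5 l)` grid: by the agreement of lines, each line of the repeated pattern sees the
same neighbouring lines as its model in the template (`exists_adj_foldLine`). The number of guards
is `c₀₀ + k c₁₀ + l c₀₁ + k l c₁₁` (`sum_foldLine`), where the `c`'s count the template guards
outside both bands, in one band only, and in both; the bounds `(a + 2) (b + 2) / 5 - 4`, `b + 2`, `a + 2` and `5`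
on them give the claim (`Template.exists_dominating`). Explicit templates exist for
`8 ≤ a ≤ b ≤ 12` (`exists_template`), and transposing the grid covers the remaining sizes.
-/

/-- Adjacency in the `m × n` grid `P_m □ P_n` on vertex set `Fin m × Fin n`. -/
def GridAdj (m n : ℕ) (v w : Fin m × Fin n) : Prop :=
  |(v.1 : ℤ) - (w.1 : ℤ)| + |(v.2 : ℤ) - (w.2 : ℤ)| = 1

/-- A set of vertices dominates the `m × n` grid if every vertex has an element
of the set in its closed neighborhood. -/
def GridDominating (m n : ℕ) (D : Set (Fin m × Fin n)) : Prop :=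
  ∀ v : Fin m × Fin n, ∃ u ∈ D, u = v ∨ GridAdj m n v u

/-- An eternal dominating family for `P_m □ P_n`: a nonempty collection of
dominating sets such that any attack on a vertex not in the current set can be
defended by a move (a bijection onto another member of the collection, moving
each guard within its closed neighborhood) that places a guard on the attacked
vertex. -/
def EternalDominatingFamily (m n : ℕ) (𝒮 : Set (Set (Fin m × Fin n))) : Prop :=
  𝒮.Nonempty ∧
  (∀ S ∈ 𝒮, GridDominating m n S) ∧
  (∀ S ∈ 𝒮, ∀ a : Fin m × Fin n, a ∉ S →
    ∃ S' ∈ 𝒮, a ∈ S' ∧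
      ∃ σ : Fin m × Fin n → Fin m × Fin n,
        Set.BijOn σ S S' ∧ ∀ v ∈ S, σ v = v ∨ GridAdj m n v (σ v))

open Finset

/-! ### Repeating a band of five lines -/

/-- The line of the template (which has `a + 5` lines, with the band `r, …, r + 4`) that is copied
to line `x` of the grid in which the band is repeated `k` times. For `k = 0` the band is skipped. -/
def foldLine (r k x : ℕ) : ℕ :=
  if x < r then x else if x < r + 5 * k then r + (x - r) % 5 else x + 5 - 5 * k

/-- The sum of `F` over the `a` lines of the template outside its band. -/
def outer (a r : ℕ) (F : ℕ → ℕ) : ℕ :=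
  ∑ x ∈ range r, F x + ∑ x ∈ range (a - r), F (r + 5 + x)

/-- The sum of `F` over the five lines of the band. -/
def band (r : ℕ) (F : ℕ → ℕ) : ℕ := ∑ t ∈ range 5, F (r + t)

lemma foldLine_lt {a r k x : ℕ} (hr : r < a) (hx : x < a + 5 * k) : foldLine r k x < a + 5 := by
  unfold foldLine
  split_ifs <;> omega

/-- A property of template lines which does not distinguish the lines identified by repetition
passes from a neighbour of `foldLine r k x` in the template to a neighbour of `x`. -/
lemma exists_adj_foldLine {a r k x i : ℕ} {P : ℕ → Prop} (hr0 : 0 < r) (hr : r < a)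
    (h₁ : P (r + 4) ↔ P (r - 1)) (h₂ : P (r + 5) ↔ P r)
    (hx : x < a + 5 * k) (hi : i < a + 5) (hadj : i + 1 = foldLine r k x ∨ foldLine r k x + 1 = i)
    (hP : P i) :
    ∃ y < a + 5 * k, (y + 1 = x ∨ x + 1 = y) ∧ P (foldLine r k y) := by
  rcases hadj with hadj | hadj
  · have hx0 : 0 < x := by
      unfold foldLine at hadj
      split_ifs at hadj <;> omega
    refine ⟨x - 1, by omega, by omega, ?_⟩
    have key : foldLine r k (x - 1) = i ∨ (foldLine r k (x - 1) = r + 4 ∧ i = r - 1) ∨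
        (foldLine r k (x - 1) = r - 1 ∧ i = r + 4) := by
      unfold foldLine at hadj ⊢
      split_ifs at hadj ⊢ <;> omega
    rcases key with h | ⟨h, rfl⟩ | ⟨h, rfl⟩
    · rwa [h]
    · rw [h]; exact h₁.2 hP
    · rw [h]; exact h₁.1 hP
  · have hx1 : x + 1 < a + 5 * k := by
      unfold foldLine at hadj
      split_ifs at hadj <;> omega
    refine ⟨x + 1, hx1, by omega, ?_⟩
    have key : foldLine r k (x + 1) = i ∨ (foldLine r k (x + 1) = r + 5 ∧ i = r) ∨
        (foldLine r k (x + 1) = r ∧ i = r + 5) := by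
      unfold foldLine at hadj ⊢
      split_ifs at hadj ⊢ <;> omega
    rcases key with h | ⟨h, rfl⟩ | ⟨h, rfl⟩
    · rwa [h]
    · rw [h]; exact h₂.2 hP
    · rw [h]; exact h₂.1 hP

lemma sum_foldLine {a r : ℕ} (k : ℕ) (hr : r < a) (F : ℕ → ℕ) :
    ∑ x ∈ range (a + 5 * k), F (foldLine r k x) = outer a r F + k * band r F := by
  have hmid : ∀ k : ℕ, ∑ x ∈ range (5 * k), F (r + x % 5) = k * band r F := by
    intro k
    induction k with
    | zero => simp
    | succ k ih =>
      rw [show 5 * (k + 1) = 5 * k + 5 by ring, sum_range_add, ih, add_mul, one_mul, band]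
      congr 1
      refine sum_congr rfl fun t ht => ?_
      rw [mem_range] at ht
      congr 2
      omega
  rw [show a + 5 * k = r + 5 * k + (a - r) by omega, sum_range_add, sum_range_add, ← hmid, outer]
  have e₁ : ∑ x ∈ range r, F (foldLine r k x) = ∑ x ∈ range r, F x := by
    refine sum_congr rfl fun x hx => ?_
    rw [mem_range] at hx
    simp [foldLine, hx]
  have e₂ : ∑ x ∈ range (5 * k), F (foldLine r k (r + x)) = ∑ x ∈ range (5 * k), F (r + x % 5) := by
    refine sum_congr rfl fun x hx => ?_
    rw [mem_range] at hx
    simp [foldLine, hx]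
  have e₃ : ∑ x ∈ range (a - r), F (foldLine r k (r + 5 * k + x)) =
      ∑ x ∈ range (a - r), F (r + 5 + x) := by
    refine sum_congr rfl fun x _ => ?_
    congr 1
    unfold foldLine
    split_ifs <;> omega
  rw [e₁, e₂, e₃]
  ring

/-! ### Templates -/

/-- `Template a b M`: the pattern `M` dominates the `(a + 5) × (b + 5)` grid, is compatible with
repeating (or deleting) the bands of five lines starting at row `a / 2` and at column `b / 2`, and
has few enough guards inside and outside the bands. -/
structure Template (a b : ℕ) (M : ℕ → ℕ → Bool) : Prop where
  dom : ∀ i < a + 5, ∀ j < b + 5, M i j ∨ (0 < i ∧ M (i - 1) j) ∨ (i + 1 < a + 5 ∧ M (i + 1) j) ∨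
    (0 < j ∧ M i (j - 1)) ∨ (j + 1 < b + 5 ∧ M i (j + 1))
  row : ∀ j < b + 5, M (a / 2 + 4) j = M (a / 2 - 1) j ∧ M (a / 2 + 5) j = M (a / 2) j
  col : ∀ i < a + 5, M i (b / 2 + 4) = M i (b / 2 - 1) ∧ M i (b / 2 + 5) = M i (b / 2)
  c₀₀ : outer a (a / 2) (fun i => outer b (b / 2) fun j => (M i j).toNat) + 4 ≤
    (a + 2) * (b + 2) / 5
  c₁₀ : band (a / 2) (fun i => outer b (b / 2) fun j => (M i j).toNat) ≤ b + 2
  c₀₁ : outer a (a / 2) (fun i => band (b / 2) fun j => (M i j).toNat) ≤ a + 2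
  c₁₁ : band (a / 2) (fun i => band (b / 2) fun j => (M i j).toNat) ≤ 5

/-- The pattern whose `i`-th row has its guards in the columns listed in the `i`-th entry. -/
def ofRows (L : List (List ℕ)) (i j : ℕ) : Bool := (L.getD i []).contains j

lemma gridAdj_of_row {m n : ℕ} {v u : Fin m × Fin n} (h₂ : u.2 = v.2)
    (h₁ : (u.1 : ℕ) + 1 = v.1 ∨ (v.1 : ℕ) + 1 = u.1) : GridAdj m n v u := by
  unfold GridAdj
  rw [h₂, sub_self, abs_zero, add_zero]
  rcases h₁ with h | h <;> rw [← h] <;> simp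

lemma gridAdj_of_col {m n : ℕ} {v u : Fin m × Fin n} (h₁ : u.1 = v.1)
    (h₂ : (u.2 : ℕ) + 1 = v.2 ∨ (v.2 : ℕ) + 1 = u.2) : GridAdj m n v u := by
  unfold GridAdj
  rw [h₁, sub_self, abs_zero, zero_add]
  rcases h₂ with h | h <;> rw [← h] <;> simp

lemma Template.exists_dominating {a b : ℕ} {M : ℕ → ℕ → Bool} (T : Template a b M)
    (ha : 2 ≤ a) (hb : 2 ≤ b) (k l : ℕ) :
    ∃ D : Finset (Fin (a + 5 * k) × Fin (b + 5 * l)),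
      GridDominating (a + 5 * k) (b + 5 * l) (D : Set (Fin (a + 5 * k) × Fin (b + 5 * l))) ∧
      D.card ≤ (a + 5 * k + 2) * (b + 5 * l + 2) / 5 - 4 := by
  have hra : a / 2 < a := by omega
  have hrb : b / 2 < b := by omega
  refine ⟨univ.filter fun v => M (foldLine (a / 2) k v.1) (foldLine (b / 2) l v.2) = true, ?_, ?_⟩
  · rintro ⟨⟨x, hx⟩, ⟨y, hy⟩⟩
    have hfx := foldLine_lt hra hx
    have hfy := foldLine_lt hrb hy
    have hrow := T.row _ hfy
    have hcol := T.col _ hfx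
    -- `stepRow` and `stepCol` carry a dominating neighbour in the template, in the same column or
    -- in the same row, over to the grid.
    have stepRow : ∀ i < a + 5, (i + 1 = foldLine (a / 2) k x ∨ foldLine (a / 2) k x + 1 = i) →
        M i (foldLine (b / 2) l y) = true →
        ∃ x' < a + 5 * k, (x' + 1 = x ∨ x + 1 = x') ∧
          M (foldLine (a / 2) k x') (foldLine (b / 2) l y) = true := fun i hi hadj hM =>
      exists_adj_foldLine (P := fun i => M i (foldLine (b / 2) l y) = true) (by omega) hra
        (by simp only [hrow.1]) (by simp only [hrow.2]) hx hi hadj hM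
    have stepCol : ∀ j < b + 5, (j + 1 = foldLine (b / 2) l y ∨ foldLine (b / 2) l y + 1 = j) →
        M (foldLine (a / 2) k x) j = true →
        ∃ y' < b + 5 * l, (y' + 1 = y ∨ y + 1 = y') ∧
          M (foldLine (a / 2) k x) (foldLine (b / 2) l y') = true := fun j hj hadj hM =>
      exists_adj_foldLine (P := fun j => M (foldLine (a / 2) k x) j = true) (by omega) hrb
        (by simp only [hcol.1]) (by simp only [hcol.2]) hy hj hadj hM
    rcases T.dom _ hfx _ hfy with h | ⟨h0, h⟩ | ⟨h0, h⟩ | ⟨h0, h⟩ | ⟨h0, h⟩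
    · exact ⟨(⟨x, hx⟩, ⟨y, hy⟩), by simpa using h, Or.inl rfl⟩
    · obtain ⟨x', hx', hadj, hM⟩ := stepRow _ (by omega) (by omega) h
      exact ⟨(⟨x', hx'⟩, ⟨y, hy⟩), by simpa using hM, Or.inr (gridAdj_of_row rfl hadj)⟩
    · obtain ⟨x', hx', hadj, hM⟩ := stepRow _ h0 (by omega) h
      exact ⟨(⟨x', hx'⟩, ⟨y, hy⟩), by simpa using hM, Or.inr (gridAdj_of_row rfl hadj)⟩
    · obtain ⟨y', hy', hadj, hM⟩ := stepCol _ (by omega) (by omega) h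
      exact ⟨(⟨x, hx⟩, ⟨y', hy'⟩), by simpa using hM, Or.inr (gridAdj_of_col rfl hadj)⟩
    · obtain ⟨y', hy', hadj, hM⟩ := stepCol _ h0 (by omega) h
      exact ⟨(⟨x, hx⟩, ⟨y', hy'⟩), by simpa using hM, Or.inr (gridAdj_of_col rfl hadj)⟩
  · have hcard : (univ.filter fun v : Fin (a + 5 * k) × Fin (b + 5 * l) =>
        M (foldLine (a / 2) k v.1) (foldLine (b / 2) l v.2) = true).card =
        ∑ x ∈ range (a + 5 * k), ∑ y ∈ range (b + 5 * l),
          (M (foldLine (a / 2) k x) (foldLine (b / 2) l y)).toNat := by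
      rw [card_filter, Fintype.sum_prod_type, ← Fin.sum_univ_eq_sum_range
        (fun x => ∑ y ∈ range (b + 5 * l), (M (foldLine (a / 2) k x) (foldLine (b / 2) l y)).toNat)]
      refine sum_congr rfl fun x _ => ?_
      rw [← Fin.sum_univ_eq_sum_range
        (fun y => (M (foldLine (a / 2) k x) (foldLine (b / 2) l y)).toNat)]
      refine sum_congr rfl fun y _ => ?_
      cases M (foldLine (a / 2) k x) (foldLine (b / 2) l y) <;> rfl
    rw [hcard]
    have hsum : ∀ x, ∑ y ∈ range (b + 5 * l),
        (M (foldLine (a / 2) k x) (foldLine (b / 2) l y)).toNat =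
        outer b (b / 2) (fun j => (M (foldLine (a / 2) k x) j).toNat) +
          l * band (b / 2) (fun j => (M (foldLine (a / 2) k x) j).toNat) := fun x =>
      sum_foldLine l hrb fun j => (M (foldLine (a / 2) k x) j).toNat
    rw [sum_congr rfl fun x _ => hsum x, sum_add_distrib, ← mul_sum,
      sum_foldLine k hra fun i => outer b (b / 2) fun j => (M i j).toNat,
      sum_foldLine k hra fun i => band (b / 2) fun j => (M i j).toNat]
    have hdiv : (a + 5 * k + 2) * (b + 5 * l + 2) / 5 =
        (a + 2) * (b + 2) / 5 + (k * (b + 2) + l * (a + 2 + k * 5)) := by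
      rw [← Nat.add_mul_div_left _ _ (by norm_num : 0 < 5)]
      congr 1
      ring
    have h₀₀ := T.c₀₀
    have h₁₀ := Nat.mul_le_mul_left k T.c₁₀
    have h₀₁ := Nat.mul_le_mul_left l (Nat.add_le_add T.c₀₁ (Nat.mul_le_mul_left k T.c₁₁))
    omega

/-! ### The explicit templates -/

lemma template_8_8 : Template 8 8 (ofRows
    [[1, 5, 10, 12], [3, 7, 8], [0, 1, 6, 11], [4, 9], [2, 7, 12], [0, 5, 10], [3, 8, 12],
     [0, 1, 6, 11], [4, 9], [2, 7, 12], [0, 5, 10], [3, 7, 8, 12], [1, 5, 10]]) := by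
  constructor <;> decide +kernel

lemma template_8_9 : Template 8 9 (ofRows
    [[3, 8, 11], [0, 1, 5, 6, 11, 13], [4, 9], [2, 7, 12], [0, 5, 10], [3, 8, 13],
     [1, 6, 11], [0, 4, 9, 12], [2, 7, 12], [0, 5, 10], [3, 8, 13], [1, 6, 11],
     [1, 4, 6, 9, 13]]) := by
  constructor <;> decide +kernel

lemma template_8_10 : Template 8 10 (ofRows
    [[3, 8, 12, 14], [0, 1, 5, 6, 10], [3, 8, 13], [1, 6, 11], [4, 9, 14], [0, 2, 7, 12],
     [5, 10], [1, 3, 8, 13, 14], [1, 6, 11], [4, 9, 14], [0, 2, 7, 12], [5, 10, 14],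
     [1, 3, 7, 8, 12]]) := by
  constructor <;> decide +kernel

lemma template_8_11 : Template 8 11 (ofRows
    [[1, 4, 9, 13], [1, 6, 7, 11, 15], [3, 8, 13], [0, 5, 10, 15], [2, 7, 12],
     [0, 4, 9, 14, 15], [1, 6, 11], [3, 8, 13], [0, 5, 10, 15], [2, 7, 12], [0, 4, 9, 14],
     [3, 6, 11], [1, 4, 8, 9, 13, 15]]) := by
  constructor <;> decide +kernel

lemma template_8_12 : Template 8 12 (ofRows
    [[1, 3, 6, 8, 11, 15], [5, 10, 13], [0, 2, 7, 12, 16], [4, 9, 14], [1, 6, 11, 16],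
     [3, 8, 13], [0, 5, 10, 15], [0, 2, 7, 12, 16], [4, 9, 14], [1, 6, 11, 16],
     [3, 8, 13], [0, 5, 10, 15], [2, 3, 7, 8, 12, 15]]) := by
  constructor <;> decide +kernel

lemma template_9_9 : Template 9 9 (ofRows
    [[3, 8, 11], [0, 1, 5, 6, 13], [4, 9, 10], [2, 7, 12], [0, 5, 10], [3, 8, 13],
     [0, 1, 6, 11], [4, 9, 12], [2, 7, 12], [0, 5, 10], [3, 8, 13], [1, 6, 11],
     [0, 4, 9, 13], [2, 5, 7, 11]]) := by
  constructor <;> decide +kernel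

lemma template_9_10 : Template 9 10 (ofRows
    [[1, 5, 10, 13], [3, 7, 8, 13], [0, 1, 6, 11], [4, 9, 14], [2, 7, 12], [0, 5, 10, 14],
     [3, 8, 13], [0, 1, 6, 11], [4, 9, 14], [2, 7, 12], [0, 5, 10, 12], [3, 8, 14],
     [1, 6, 7, 11], [1, 4, 9, 13]]) := by
  constructor <;> decide +kernel

lemma template_9_11 : Template 9 11 (ofRows
    [[1, 4, 8, 9, 13], [1, 6, 11, 15], [3, 8, 13], [0, 5, 10, 15], [2, 7, 12],
     [1, 4, 9, 14], [1, 6, 11], [3, 8, 13, 15], [0, 5, 10, 15], [2, 7, 12], [4, 9, 14],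
     [0, 1, 6, 11, 12], [3, 8, 15], [1, 5, 6, 10, 13]]) := by
  constructor <;> decide +kernel

lemma template_9_12 : Template 9 12 (ofRows
    [[2, 5, 8, 10, 14], [0, 2, 7, 12, 16], [4, 9, 14], [1, 6, 11, 16], [3, 8, 13],
     [0, 5, 10, 15], [2, 7, 12], [1, 4, 9, 14, 16], [1, 6, 11, 16], [3, 8, 13],
     [0, 5, 10, 15], [2, 7, 12, 13], [0, 4, 9, 16], [2, 6, 8, 11, 14]]) := by
  constructor <;> decide +kernel

lemma template_10_10 : Template 10 10 (ofRows
    [[2, 6, 8, 11, 13], [0, 4, 9], [2, 7, 12, 14], [0, 5, 10], [3, 8, 13], [1, 6, 11],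
     [1, 4, 9, 14], [2, 7, 12], [0, 5, 10, 14], [3, 8, 13], [1, 6, 11], [4, 9, 14],
     [0, 2, 7, 12], [5, 6, 10, 14], [1, 3, 8, 12]]) := by
  constructor <;> decide +kernel

lemma template_10_11 : Template 10 11 (ofRows
    [[2, 6, 8, 11, 14], [0, 4, 9, 14], [2, 7, 12], [0, 5, 10, 15], [3, 8, 13],
     [1, 6, 11, 14], [4, 9, 14], [0, 2, 7, 12], [0, 5, 10, 15], [3, 8, 13],
     [1, 6, 11, 14], [2, 4, 9, 14], [0, 7, 12], [3, 5, 10, 15], [1, 5, 8, 10, 13]]) := by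
  constructor <;> decide +kernel

lemma template_10_12 : Template 10 12 (ofRows
    [[1, 3, 7, 12, 16], [5, 9, 10, 14], [0, 2, 7, 12, 16], [4, 9, 14], [1, 6, 11, 16],
     [3, 8, 13], [0, 5, 10, 15, 16], [0, 2, 7, 12], [4, 9, 14], [1, 6, 11, 16],
     [3, 8, 13], [0, 5, 10, 15], [2, 7, 12], [0, 4, 9, 14, 16], [2, 6, 8, 11, 14]]) := by
  constructor <;> decide +kernel

lemma template_11_11 : Template 11 11 (ofRows
    [[1, 5, 10, 13], [3, 7, 8, 15], [0, 6, 11, 12], [2, 4, 9, 14], [2, 7, 12],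
     [0, 5, 10, 15], [3, 8, 13], [0, 1, 6, 11, 14], [4, 9, 14], [2, 7, 12],
     [0, 5, 10, 15], [3, 8, 13], [1, 6, 11, 13], [3, 4, 9, 15], [0, 7, 12],
     [2, 5, 7, 10, 14]]) := by
  constructor <;> decide +kernel

lemma template_11_12 : Template 11 12 (ofRows
    [[3, 6, 11, 15], [0, 1, 3, 8, 9, 13], [5, 10, 15, 16], [0, 2, 7, 12], [4, 9, 14],
     [1, 6, 11, 16], [1, 3, 8, 13], [5, 10, 15, 16], [0, 2, 7, 12], [4, 9, 14],
     [1, 6, 11, 16], [3, 8, 13], [0, 5, 10, 15], [2, 7, 12, 13], [0, 4, 9, 16],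
     [2, 6, 8, 11, 14]]) := by
  constructor <;> decide +kernel

lemma template_12_12 : Template 12 12 (ofRows
    [[1, 5, 7, 10, 12, 14], [3, 8, 16], [0, 1, 6, 11, 13], [4, 9, 15], [2, 7, 12, 15],
     [0, 5, 10, 15], [3, 8, 13], [0, 1, 6, 11, 16], [4, 9, 14], [2, 7, 12, 16],
     [0, 5, 10, 15], [3, 8, 13], [1, 6, 11, 16], [4, 9, 14], [0, 2, 7, 12],
     [5, 10, 15, 16], [1, 3, 6, 8, 11, 13]]) := by
  constructor <;> decide +kernel

lemma exists_template {a b : ℕ} (ha : 8 ≤ a) (hab : a ≤ b) (hb : b ≤ 12) :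
    ∃ M, Template a b M := by
  have ha' : a ≤ 12 := hab.trans hb
  interval_cases a <;> interval_cases b
  · exact ⟨_, template_8_8⟩
  · exact ⟨_, template_8_9⟩
  · exact ⟨_, template_8_10⟩
  · exact ⟨_, template_8_11⟩
  · exact ⟨_, template_8_12⟩
  · exact ⟨_, template_9_9⟩
  · exact ⟨_, template_9_10⟩
  · exact ⟨_, template_9_11⟩
  · exact ⟨_, template_9_12⟩
  · exact ⟨_, template_10_10⟩
  · exact ⟨_, template_10_11⟩
  · exact ⟨_, template_10_12⟩
  · exact ⟨_, template_11_11⟩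
  · exact ⟨_, template_11_12⟩
  · exact ⟨_, template_12_12⟩

/-! ### All grids -/

lemma exists_dominating_swap {m n : ℕ} {c : ℕ}
    (h : ∃ D : Finset (Fin m × Fin n),
      GridDominating m n (D : Set (Fin m × Fin n)) ∧ D.card ≤ c) :
    ∃ D : Finset (Fin n × Fin m),
      GridDominating n m (D : Set (Fin n × Fin m)) ∧ D.card ≤ c := by
  obtain ⟨D, hD, hc⟩ := h
  refine ⟨D.map (Equiv.prodComm _ _).toEmbedding, fun v => ?_, by rwa [card_map]⟩
  obtain ⟨u, hu, huv⟩ := hD v.swap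
  refine ⟨u.swap, by simpa using hu, huv.imp (fun h => by rw [h, Prod.swap_swap]) fun h => ?_⟩
  unfold GridAdj at h ⊢
  rw [add_comm]
  exact h

/-- Chang's bound: for `m, n ≥ 8`, the `m × n` grid has a dominating set of
cardinality at most `⌊(m+2)(n+2)/5⌋ - 4`. -/
theorem chang_domination_bound (m n : ℕ) (hm : 8 ≤ m) (hn : 8 ≤ n) :
    ∃ D : Finset (Fin m × Fin n),
      GridDominating m n (D : Set (Fin m × Fin n)) ∧
      D.card ≤ (m + 2) * (n + 2) / 5 - 4 := by
  -- The representatives of `m` and `n` modulo `5` in `8, …, 12`.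
  obtain ⟨a, k, ha, ha', rfl⟩ : ∃ a k, 8 ≤ a ∧ a ≤ 12 ∧ m = a + 5 * k :=
    ⟨8 + (m - 8) % 5, (m - 8) / 5, by omega, by omega, by omega⟩
  obtain ⟨b, l, hb, hb', rfl⟩ : ∃ b l, 8 ≤ b ∧ b ≤ 12 ∧ n = b + 5 * l :=
    ⟨8 + (n - 8) % 5, (n - 8) / 5, by omega, by omega, by omega⟩
  rcases le_total a b with hab | hab
  · obtain ⟨M, T⟩ := exists_template ha hab hb'
    exact T.exists_dominating (by omega) (by omega) k l
  · obtain ⟨M, T⟩ := exists_template hb hab ha'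
    rw [mul_comm (a + 5 * k + 2)]
    exact exists_dominating_swap (T.exists_dominating (by omega) (by omega) l k)
end

section
/- (Finite Rotate-Square invariant.) Let m, n ≥ 7 be integers with m ≡ 2 (mod 5) and n ≡ 2 (mod 5). There exists a nonempty collection 𝒮 of subsets of the vertex set of P_m□P_n such that: (i) every S ∈ 𝒮 is a dominating set of P_m□P_n of cardinality (m−2)(n−2)/5 + 2(m+n) − 4; (ii) every S ∈ 𝒮 contains all boundary and corner vertices (all vertices (x,y) with x ∈ {0, m−1} or y ∈ {0, n−1}); (iii) every S ∈ 𝒮 contains, for some t ∈ ZMod 5, either the set {(x,y) : 0 ≤ x < m, 0 ≤ y < n, x + 2y ≡ t (mod 5)} or the set {(x,y) : 0 ≤ x < m, 0 ≤ y < n, 2x + y ≡ t (mod 5)}; and (iv) for every S ∈ 𝒮 and every vertex a ∉ S there exist S' ∈ 𝒮 with a ∈ S' and a bijection σ from S onto S' with σ(v) ∈ N[v] for every v ∈ S. -/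
/-! ### The rotation in integer coordinates -/

/-- Displacement of a guard on a boundary side that carries guards between the positions of
residue `1`, which receive a guard from the interior, and those of residue `4`, which send one
in. Here `v` is the residue of the guard's position and `c` that of the first non-corner position
of the side. When `c ≤ 1` the flow runs forwards through `1, 2, 3, 4`; otherwise it runs backwards
through `1, 0, 4`. Either way none of these runs is cut by an end of the side. The value at `v = 4`
is not used: that guard enters the interior. -/
def walk (c v : ℤ) : ℤ :=
  if c ≤ 1 then (if 1 ≤ v ∧ v ≤ 3 then 1 else 0) else (if v ≤ 1 then -1 else 0)

/-- The counterpart of `walk` with the two roles exchanged: positions of residue `4` receive and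
those of residue `1` send. The value at `v = 1` is not used. -/
def walkRev (c v : ℤ) : ℤ :=
  if c ≤ 1 then (if 2 ≤ v then -1 else 0) else (if v = 4 ∨ v = 0 then 1 else 0)

/-- The rotation of a guard on `V(t)` in residue coordinates `(u, v)` centred at a common point
of `V(t)` and `V'(t')`: `(0,0)` stays, and `(1,2) → (1,3)`, `(2,4) → (3,4)`, `(4,3) → (4,2)`,
`(3,1) → (2,1)`. The residue `u` alone determines the direction. -/
def rot (u : ℤ) (x y : ℤ) : ℤ × ℤ :=
  if u = 0 then (x, y) else if u = 1 then (x, y + 1) else if u = 2 then (x + 1, y)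
  else if u = 3 then (x - 1, y) else (x, y - 1)

/-- The inverse of `rot` on `V'(t')`, again determined by `u` alone. -/
def rotRev (u : ℤ) (x y : ℤ) : ℤ × ℤ :=
  if u = 0 then (x, y) else if u = 1 then (x, y - 1) else if u = 2 then (x + 1, y)
  else if u = 3 then (x - 1, y) else (x, y + 1)

/-- The full move of the guards from `∂ ∪ V(t)` to `∂ ∪ V'(t')`, with `∂` the boundary. The offsets
`i, j ∈ {0, …, 4}` are chosen so that `(x + i) % 5` and `(y + j) % 5` are the residue coordinates
centred at a common point of `V(t)` and `V'(t')`. Interior guards follow `rot`. Guards cross the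
left and right sides only if `i = 2`, and the bottom and top sides only if `j = 2`; in those cases
the guards on the side (corners excepted) shift along it. -/
def step (m n i j x y : ℤ) : ℤ × ℤ :=
  if 1 ≤ x ∧ x ≤ m - 2 ∧ 1 ≤ y ∧ y ≤ n - 2 then rot ((x + i) % 5) x y
  else if x = 0 ∧ i = 2 ∧ 1 ≤ y ∧ y ≤ n - 2 then
    (if (y + j) % 5 = 4 then (x + 1, y) else (x, y + walk ((1 + j) % 5) ((y + j) % 5)))
  else if x = m - 1 ∧ i = 2 ∧ 1 ≤ y ∧ y ≤ n - 2 then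
    (if (y + j) % 5 = 1 then (x - 1, y) else (x, y + walkRev ((1 + j) % 5) ((y + j) % 5)))
  else if y = 0 ∧ j = 2 ∧ 1 ≤ x ∧ x ≤ m - 2 then
    (if (x + i) % 5 = 1 then (x, y + 1) else (x + walkRev ((1 + i) % 5) ((x + i) % 5), y))
  else if y = n - 1 ∧ j = 2 ∧ 1 ≤ x ∧ x ≤ m - 2 then
    (if (x + i) % 5 = 4 then (x, y - 1) else (x + walk ((1 + i) % 5) ((x + i) % 5), y))
  else (x, y)

/-- The inverse of `step`, defined on `∂ ∪ V'(t')`. -/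
def back (m n i j x y : ℤ) : ℤ × ℤ :=
  if 1 ≤ x ∧ x ≤ m - 2 ∧ 1 ≤ y ∧ y ≤ n - 2 then rotRev ((x + i) % 5) x y
  else if x = 0 ∧ i = 2 ∧ 1 ≤ y ∧ y ≤ n - 2 then
    (if (y + j) % 5 = 1 then (x + 1, y) else (x, y + walkRev ((1 + j) % 5) ((y + j) % 5)))
  else if x = m - 1 ∧ i = 2 ∧ 1 ≤ y ∧ y ≤ n - 2 then
    (if (y + j) % 5 = 4 then (x - 1, y) else (x, y + walk ((1 + j) % 5) ((y + j) % 5)))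
  else if y = 0 ∧ j = 2 ∧ 1 ≤ x ∧ x ≤ m - 2 then
    (if (x + i) % 5 = 4 then (x, y + 1) else (x + walk ((1 + i) % 5) ((x + i) % 5), y))
  else if y = n - 1 ∧ j = 2 ∧ 1 ≤ x ∧ x ≤ m - 2 then
    (if (x + i) % 5 = 1 then (x, y - 1) else (x + walkRev ((1 + i) % 5) ((x + i) % 5), y))
  else (x, y)

/-- Boundary condition on integer coordinates of the `m × n` grid. -/
def Bd (m n x y : ℤ) : Prop := x = 0 ∨ x = m - 1 ∨ y = 0 ∨ y = n - 1


set_option maxHeartbeats 4000000 in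
theorem step_mem (m n i j x y : ℤ) (hm5 : m % 5 = 2) (hn5 : n % 5 = 2)
    (hi : 0 ≤ i ∧ i < 5) (hj : 0 ≤ j ∧ j < 5) (hx : 0 ≤ x ∧ x < m) (hy : 0 ≤ y ∧ y < n)
    (h : Bd m n x y ∨ ((x + i) + 2 * (y + j)) % 5 = 0) :
    (0 ≤ (step m n i j x y).1 ∧ (step m n i j x y).1 < m ∧
      0 ≤ (step m n i j x y).2 ∧ (step m n i j x y).2 < n) ∧
    (Bd m n (step m n i j x y).1 (step m n i j x y).2 ∨
      (2 * ((step m n i j x y).1 + i) + ((step m n i j x y).2 + j)) % 5 = 0) := by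
  unfold step walk walkRev rot Bd at *
  split_ifs <;> dsimp only <;> omega

theorem step_near (m n i j x y : ℤ) :
    ((step m n i j x y).1 = x ∧ (step m n i j x y).2 = y) ∨
      |x - (step m n i j x y).1| + |y - (step m n i j x y).2| = 1 := by
  unfold step walk walkRev rot
  split_ifs <;> simp

set_option maxHeartbeats 4000000 in
theorem back_step (m n i j x y : ℤ) (hm : 7 ≤ m) (hn : 7 ≤ n) (hm5 : m % 5 = 2) (hn5 : n % 5 = 2)
    (hi : 0 ≤ i ∧ i < 5) (hj : 0 ≤ j ∧ j < 5) (hx : 0 ≤ x ∧ x < m) (hy : 0 ≤ y ∧ y < n)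
    (h : Bd m n x y ∨ ((x + i) + 2 * (y + j)) % 5 = 0) :
    back m n i j (step m n i j x y).1 (step m n i j x y).2 = (x,y) := by
  unfold step walk walkRev rot Bd at *
  split_ifs <;> dsimp only <;> unfold back walk walkRev rotRev <;>
    grind

/-! ### The guard configurations: cardinality and domination -/

/-- The guard configuration consisting of the boundary and the class `x + 2y ≡ t (mod 5)`. -/
def famV (m n t : ℕ) : Set (Fin m × Fin n) :=
  {v | ((v.1 : ℕ) = 0 ∨ (v.1 : ℕ) = m - 1 ∨ (v.2 : ℕ) = 0 ∨ (v.2 : ℕ) = n - 1) ∨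
    ((v.1 : ℕ) + 2 * (v.2 : ℕ)) % 5 = t}

/-- The guard configuration consisting of the boundary and the class `2x + y ≡ t (mod 5)`. -/
def famV' (m n t : ℕ) : Set (Fin m × Fin n) :=
  {v | ((v.1 : ℕ) = 0 ∨ (v.1 : ℕ) = m - 1 ∨ (v.2 : ℕ) = 0 ∨ (v.2 : ℕ) = n - 1) ∨
    (2 * (v.1 : ℕ) + (v.2 : ℕ)) % 5 = t}

theorem sum_mod_five (a c t : ℕ) (ht : t < 5) :
    ∑ x ∈ Finset.range (5 * a), (if (x + c) % 5 = t then 1 else 0) = a := by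
  induction a with
  | zero => simp
  | succ a ih =>
    rw [show 5 * (a + 1) = 5 * a + 1 + 1 + 1 + 1 + 1 by ring]
    simp only [Finset.sum_range_succ, ih]
    split_ifs <;> omega

/-- A non-boundary row holds its two end points and one vertex in every five others. -/
theorem row_count (a y t : ℕ) (ht : t < 5) :
    ∑ x ∈ Finset.range (5 * a + 2),
      (if x = 0 ∨ x = 5 * a + 1 ∨ (x + 2 * y) % 5 = t then 1 else 0) = a + 2 := by
  rw [Finset.sum_range_succ, Finset.sum_range_succ']
  have : ∑ x ∈ Finset.range (5 * a),
      (if x + 1 = 0 ∨ x + 1 = 5 * a + 1 ∨ (x + 1 + 2 * y) % 5 = t then 1 else 0) =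
      ∑ x ∈ Finset.range (5 * a), (if (x + (1 + 2 * y)) % 5 = t then 1 else 0) := by
    refine Finset.sum_congr rfl fun x hx => ?_
    have := Finset.mem_range.1 hx
    refine if_congr ?_ rfl rfl
    omega
  rw [this, sum_mod_five a _ t ht]
  simp

theorem famV_ncard (a b t : ℕ) (ht : t < 5) :
    (famV (5 * a + 2) (5 * b + 2) t).ncard = 5 * a * b + 10 * a + 10 * b + 4 := by
  classical
  rw [Set.ncard_eq_toFinset_card', famV, Set.toFinset_ofPred, Finset.card_filter,
    Fintype.sum_prod_type_right]
  have key : ∀ y : Fin (5 * b + 2), (∑ x : Fin (5 * a + 2),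
      if ((x : ℕ) = 0 ∨ (x : ℕ) = 5 * a + 2 - 1 ∨ (y : ℕ) = 0 ∨ (y : ℕ) = 5 * b + 2 - 1) ∨
        ((x : ℕ) + 2 * (y : ℕ)) % 5 = t then 1 else 0) =
      if (y : ℕ) = 0 ∨ (y : ℕ) = 5 * b + 1 then 5 * a + 2 else a + 2 := by
    intro y
    split_ifs with hy
    · rw [Finset.sum_congr rfl (fun x _ => if_pos (by omega))]
      simp
    · rw [← row_count a y t ht, ← Fin.sum_univ_eq_sum_range
        (fun x => if x = 0 ∨ x = 5 * a + 1 ∨ (x + 2 * (y : ℕ)) % 5 = t then 1 else 0)]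
      refine Finset.sum_congr rfl fun x _ => if_congr ?_ rfl rfl
      omega
  rw [Finset.sum_congr rfl (fun y _ => key y), Fin.sum_univ_eq_sum_range
    (fun y => if y = 0 ∨ y = 5 * b + 1 then 5 * a + 2 else a + 2),
    Finset.sum_range_succ, Finset.sum_range_succ']
  have : ∑ y ∈ Finset.range (5 * b),
      (if y + 1 = 0 ∨ y + 1 = 5 * b + 1 then 5 * a + 2 else a + 2) =
      ∑ y ∈ Finset.range (5 * b), (a + 2) := by
    refine Finset.sum_congr rfl fun x hx => ?_
    have := Finset.mem_range.1 hx
    rw [if_neg (by omega)]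
  rw [this]
  simp
  ring

theorem famV'_ncard (a b t : ℕ) (ht : t < 5) :
    (famV' (5 * a + 2) (5 * b + 2) t).ncard = 5 * a * b + 10 * a + 10 * b + 4 := by
  have h : famV' (5 * a + 2) (5 * b + 2) t = Set.image Prod.swap (famV (5 * b + 2) (5 * a + 2) t) := by
    rw [Set.image_swap_eq_preimage_swap]
    ext v
    simp only [famV, famV', Set.mem_ofPred_eq, Set.mem_preimage, Prod.fst_swap, Prod.snd_swap]
    omega
  rw [h, Set.ncard_image_of_injective _ Prod.swap_injective, famV_ncard b a t ht]
  ring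

theorem gridAdj_symm {m n : ℕ} {v w : Fin m × Fin n} (h : GridAdj m n v w) : GridAdj m n w v := by
  unfold GridAdj at *
  rwa [abs_sub_comm, abs_sub_comm (w.2 : ℤ)]

/-- An interior vertex has all four neighbours in the grid, so a property of natural-number
coordinates that holds somewhere on its closed neighbourhood holds at a grid vertex. -/
theorem exists_near {m n : ℕ} (v : Fin m × Fin n) (P : ℕ → ℕ → Prop)
    (hv : ¬((v.1 : ℕ) = 0 ∨ (v.1 : ℕ) = m - 1 ∨ (v.2 : ℕ) = 0 ∨ (v.2 : ℕ) = n - 1))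
    (h : P v.1 v.2 ∨ P (v.1 + 1) v.2 ∨ P (v.1 - 1) v.2 ∨ P v.1 (v.2 + 1) ∨ P v.1 (v.2 - 1)) :
    ∃ u : Fin m × Fin n, P u.1 u.2 ∧ (u = v ∨ GridAdj m n v u) := by
  obtain ⟨⟨x, hx⟩, ⟨y, hy⟩⟩ := v
  simp only at hv h
  rcases h with h | h | h | h | h
  · exact ⟨_, h, Or.inl rfl⟩
  · exact ⟨(⟨x + 1, by omega⟩, ⟨y, hy⟩), h, Or.inr (by simp [GridAdj])⟩
  · exact ⟨(⟨x - 1, by omega⟩, ⟨y, hy⟩), h, Or.inr (by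
      simp [GridAdj, Nat.cast_sub (show 1 ≤ x by omega)])⟩
  · exact ⟨(⟨x, hx⟩, ⟨y + 1, by omega⟩), h, Or.inr (by simp [GridAdj])⟩
  · exact ⟨(⟨x, hx⟩, ⟨y - 1, by omega⟩), h, Or.inr (by
      simp [GridAdj, Nat.cast_sub (show 1 ≤ y by omega)])⟩

theorem famV_dominating (m n t : ℕ) (ht : t < 5) : GridDominating m n (famV m n t) := by
  intro v
  by_cases hv : (v.1 : ℕ) = 0 ∨ (v.1 : ℕ) = m - 1 ∨ (v.2 : ℕ) = 0 ∨ (v.2 : ℕ) = n - 1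
  · exact ⟨v, Or.inl hv, Or.inl rfl⟩
  · obtain ⟨u, hu, h⟩ := exists_near v (fun x y => (x + 2 * y) % 5 = t) hv (by grind)
    exact ⟨u, Or.inr hu, h⟩

theorem famV'_dominating (m n t : ℕ) (ht : t < 5) : GridDominating m n (famV' m n t) := by
  intro v
  by_cases hv : (v.1 : ℕ) = 0 ∨ (v.1 : ℕ) = m - 1 ∨ (v.2 : ℕ) = 0 ∨ (v.2 : ℕ) = n - 1
  · exact ⟨v, Or.inl hv, Or.inl rfl⟩
  · obtain ⟨u, hu, h⟩ := exists_near v (fun x y => (2 * x + y) % 5 = t) hv (by grind)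
    exact ⟨u, Or.inr hu, h⟩

/-! ### Moves between configurations -/

/-- Any configuration of the first kind can be rotated to any configuration of the second kind. -/
theorem exists_rotate (a b t t' : ℕ) (ha : 1 ≤ a) (hb : 1 ≤ b) (ht : t < 5) (ht' : t' < 5) :
    ∃ σ : Fin (5 * a + 2) × Fin (5 * b + 2) → Fin (5 * a + 2) × Fin (5 * b + 2),
      Set.BijOn σ (famV (5 * a + 2) (5 * b + 2) t) (famV' (5 * a + 2) (5 * b + 2) t') ∧
      ∀ v ∈ famV (5 * a + 2) (5 * b + 2) t, σ v = v ∨ GridAdj _ _ v (σ v) := by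
  set m := 5 * a + 2 with hm
  set n := 5 * b + 2 with hn
  -- `(-i, -j)` solves `x + 2y ≡ t`, `2x + y ≡ t'` modulo `5`, whose determinant is `-3`.
  obtain ⟨i, hi⟩ : ∃ i : ℤ, i = (2 * t + t') % 5 := ⟨_, rfl⟩
  obtain ⟨j, hj⟩ : ∃ j : ℤ, j = (t + 2 * t') % 5 := ⟨_, rfl⟩
  have hS : ∀ v ∈ famV m n t, Bd m n (v.1 : ℕ) (v.2 : ℕ) ∨
      (((v.1 : ℕ) + i) + 2 * ((v.2 : ℕ) + j)) % 5 = 0 := by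
    rintro v (hv | hv)
    · left; unfold Bd; omega
    · right; omega
  have hstep : ∀ v ∈ famV m n t, ∃ w ∈ famV' m n t',
      ((w.1 : ℕ) : ℤ) = (step m n i j (v.1 : ℕ) (v.2 : ℕ)).1 ∧
      ((w.2 : ℕ) : ℤ) = (step m n i j (v.1 : ℕ) (v.2 : ℕ)).2 := by
    intro v hv
    have h := step_mem m n i j (v.1 : ℕ) (v.2 : ℕ) (by omega) (by omega)
      (by omega) (by omega) (by omega) (by omega) (hS v hv)
    generalize step m n i j (v.1 : ℕ) (v.2 : ℕ) = p at h
    obtain ⟨p, q⟩ := p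
    obtain ⟨⟨h1, h2, h3, h4⟩, h5⟩ := h
    simp only [Bd] at *
    lift p to ℕ using h1
    lift q to ℕ using h3
    refine ⟨(⟨p, by omega⟩, ⟨q, by omega⟩), ?_, rfl, rfl⟩
    simp only [famV', Set.mem_ofPred_eq]
    omega
  classical
  -- Outside the configuration the value of `σ` is irrelevant.
  let σ : Fin m × Fin n → Fin m × Fin n := fun v =>
    if hv : v ∈ famV m n t then (hstep v hv).choose else v
  have hσ : ∀ v ∈ famV m n t, σ v ∈ famV' m n t' ∧
      (((σ v).1 : ℕ) : ℤ) = (step m n i j (v.1 : ℕ) (v.2 : ℕ)).1 ∧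
      (((σ v).2 : ℕ) : ℤ) = (step m n i j (v.1 : ℕ) (v.2 : ℕ)).2 := by
    intro v hv
    simp only [σ, dif_pos hv]
    exact (hstep v hv).choose_spec
  have hmaps : Set.MapsTo σ (famV m n t) (famV' m n t') := fun v hv => (hσ v hv).1
  have hback : ∀ v ∈ famV m n t, back m n i j ((σ v).1 : ℕ) ((σ v).2 : ℕ) =
      (((v.1 : ℕ) : ℤ), ((v.2 : ℕ) : ℤ)) := by
    intro v hv
    rw [(hσ v hv).2.1, (hσ v hv).2.2]
    exact back_step m n i j (v.1 : ℕ) (v.2 : ℕ) (by omega) (by omega) (by omega) (by omega)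
      (by omega) (by omega) (by omega) (by omega) (hS v hv)
  have hinj : Set.InjOn σ (famV m n t) := by
    intro v hv w hw hvw
    have h1 := hback v hv
    rw [hvw, hback w hw] at h1
    simp only [Prod.mk.injEq] at h1
    ext <;> omega
  refine ⟨σ, ⟨hmaps, hinj, ?_⟩, ?_⟩
  · rw [Set.SurjOn, Set.eq_of_subset_of_ncard_le hmaps.image_subset]
    rw [hinj.ncard_image, famV_ncard a b t ht, famV'_ncard a b t' ht']
  · intro v hv
    obtain ⟨-, h1, h2⟩ := hσ v hv
    rcases step_near m n i j (v.1 : ℕ) (v.2 : ℕ) with h | h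
    · left
      rw [← h1, ← h2] at h
      ext <;> omega
    · right
      rw [← h1, ← h2] at h
      exact h

/-- The reverse rotation, by inverting the bijection: the move relation is symmetric. -/
theorem exists_rotate_symm (a b t t' : ℕ) (ha : 1 ≤ a) (hb : 1 ≤ b) (ht : t < 5) (ht' : t' < 5) :
    ∃ σ : Fin (5 * a + 2) × Fin (5 * b + 2) → Fin (5 * a + 2) × Fin (5 * b + 2),
      Set.BijOn σ (famV' (5 * a + 2) (5 * b + 2) t') (famV (5 * a + 2) (5 * b + 2) t) ∧
      ∀ v ∈ famV' (5 * a + 2) (5 * b + 2) t', σ v = v ∨ GridAdj _ _ v (σ v) := by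
  obtain ⟨σ, hb, h⟩ := exists_rotate a b t t' ha hb ht ht'
  have hinv := hb.invOn_invFunOn
  refine ⟨Function.invFunOn σ _, hinv.symm.bijOn hb.surjOn.mapsTo_invFunOn hb.mapsTo, ?_⟩
  intro w hw
  have hr := hinv.2 hw
  rcases h _ (hb.surjOn.mapsTo_invFunOn hw) with h | h
  · left; rw [← h, hr]
  · right; rw [hr] at h; exact gridAdj_symm h

/-- The Finite Rotate-Square invariant: for `m, n ≥ 7` with `m ≡ n ≡ 2 (mod 5)`
there is a nonempty collection of subsets of `P_m □ P_n`, each a dominating set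
of cardinality `(m-2)(n-2)/5 + 2(m+n) - 4` containing the full boundary and, for
some `t`, one of the sets `V(t)` or `V'(t)`, and closed under defending attacks. -/
theorem finite_rotate_square_invariant (m n : ℕ) (hm : 7 ≤ m) (hn : 7 ≤ n)
    (hm5 : m % 5 = 2) (hn5 : n % 5 = 2) :
    ∃ 𝒮 : Set (Set (Fin m × Fin n)),
      𝒮.Nonempty ∧
      (∀ S ∈ 𝒮, GridDominating m n S ∧
        S.ncard = (m - 2) * (n - 2) / 5 + 2 * (m + n) - 4) ∧
      (∀ S ∈ 𝒮, ∀ v : Fin m × Fin n,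
        ((v.1 : ℕ) = 0 ∨ (v.1 : ℕ) = m - 1 ∨ (v.2 : ℕ) = 0 ∨ (v.2 : ℕ) = n - 1) →
          v ∈ S) ∧
      (∀ S ∈ 𝒮, ∃ t : ZMod 5,
        {v : Fin m × Fin n | ((v.1 : ℕ) : ZMod 5) + 2 * ((v.2 : ℕ) : ZMod 5) = t} ⊆ S ∨
        {v : Fin m × Fin n | 2 * ((v.1 : ℕ) : ZMod 5) + ((v.2 : ℕ) : ZMod 5) = t} ⊆ S) ∧
      (∀ S ∈ 𝒮, ∀ a : Fin m × Fin n, a ∉ S →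
        ∃ S' ∈ 𝒮, a ∈ S' ∧
          ∃ σ : Fin m × Fin n → Fin m × Fin n,
            Set.BijOn σ S S' ∧ ∀ v ∈ S, σ v = v ∨ GridAdj m n v (σ v)) := by
  obtain ⟨a, rfl⟩ : ∃ a, m = 5 * a + 2 := ⟨m / 5, by omega⟩
  obtain ⟨b, rfl⟩ : ∃ b, n = 5 * b + 2 := ⟨n / 5, by omega⟩
  have ha : 1 ≤ a := by omega
  have hb : 1 ≤ b := by omega
  have hcard : (5 * a + 2 - 2) * (5 * b + 2 - 2) / 5 + 2 * (5 * a + 2 + (5 * b + 2)) - 4 =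
      5 * a * b + 10 * a + 10 * b + 4 := by
    rw [Nat.add_sub_cancel, Nat.add_sub_cancel,
      show 5 * a * (5 * b) = 5 * (5 * a * b) by ring, Nat.mul_div_cancel_left _ (by norm_num)]
    omega
  refine ⟨{S | ∃ t < 5, S = famV _ _ t ∨ S = famV' _ _ t}, ⟨_, 0, by norm_num, Or.inl rfl⟩,
    ?_, ?_, ?_, ?_⟩
  · rintro S ⟨t, ht, rfl | rfl⟩
    · exact ⟨famV_dominating _ _ t ht, by rw [famV_ncard a b t ht, hcard]⟩
    · exact ⟨famV'_dominating _ _ t ht, by rw [famV'_ncard a b t ht, hcard]⟩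
  · rintro S ⟨t, ht, rfl | rfl⟩ v hv
    · exact Or.inl hv
    · exact Or.inl hv
  · rintro S ⟨t, ht, rfl | rfl⟩
    · refine ⟨(t : ZMod 5), Or.inl fun v hv => Or.inr ?_⟩
      have hv' : (((v.1 : ℕ) + 2 * (v.2 : ℕ) : ℕ) : ZMod 5) = (t : ℕ) := by
        push_cast
        exact hv
      have := (ZMod.natCast_eq_natCast_iff' _ _ 5).1 hv'
      omega
    · refine ⟨(t : ZMod 5), Or.inr fun v hv => Or.inr ?_⟩
      have hv' : ((2 * (v.1 : ℕ) + (v.2 : ℕ) : ℕ) : ZMod 5) = (t : ℕ) := by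
        push_cast
        exact hv
      have := (ZMod.natCast_eq_natCast_iff' _ _ 5).1 hv'
      omega
  · rintro S ⟨t, ht, rfl | rfl⟩ v -
    · have hlt : (2 * (v.1 : ℕ) + (v.2 : ℕ)) % 5 < 5 := Nat.mod_lt _ (by norm_num)
      exact ⟨famV' _ _ _, ⟨_, hlt, Or.inr rfl⟩, Or.inr rfl, exists_rotate a b t _ ha hb ht hlt⟩
    · have hlt : ((v.1 : ℕ) + 2 * (v.2 : ℕ)) % 5 < 5 := Nat.mod_lt _ (by norm_num)
      exact ⟨famV _ _ _, ⟨_, hlt, Or.inl rfl⟩, Or.inr rfl, exists_rotate_symm a b _ t ha hb hlt ht⟩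
end

section
/- (Improved upper bound, partial boundary cover.) Let m, n ≥ 7 be integers with m ≡ 2 (mod 5) and n ≡ 2 (mod 5). There exists an eternal dominating family for P_m□P_n all of whose members have cardinality (mn + 4(m+n))/5; consequently γ^∞(P_m□P_n) ≤ mn/5 + (4/5)(m+n). -/
namespace EternalGrid

/-! ### Configurations on the folded grid -/

/-- The perfect dominating set `x + 2y ≡ t` (`e = true`) or `x - 2y ≡ t` (`e = false`) modulo `5`;
the coefficient `-2` is written as `3`. -/
def pat (e : Bool) (t x y : ℕ) : Bool := (x + (if e then 2 else 3) * y) % 5 == t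

/-- The row in `{1, …, 5}` in which column `x` meets the pattern. -/
def rowOf (e : Bool) (t x : ℕ) : ℕ := ([1, 2, 3, 4, 5].find? fun p => pat e t x p).getD 0

/-- The column in `{1, …, 5}` in which row `y` meets the pattern. -/
def colOf (e : Bool) (t y : ℕ) : ℕ := ([1, 2, 3, 4, 5].find? fun p => pat e t p y).getD 0

/-- The guarded positions of a boundary block, listed in increasing order, when the pattern meets
the block in position `p`. -/
def block (p : ℕ) : List ℕ := if p = 1 then [1, 3, 4] else if p = 5 then [2, 3, 5] else [2, 3, 4]

/-- The configuration `(e, t)` on folded coordinates in `{0, …, 6}²`, where `0` and `6` stand for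
the two ends of a path. -/
def occ (e : Bool) (t x y : ℕ) : Bool :=
  if x = 0 ∨ x = 6 then
    if y = 0 ∨ y = 6 then true else (block (rowOf e t x)).contains y
  else if y = 0 ∨ y = 6 then (block (colOf e t y)).contains x
  else pat e t x y

/-- The five displacements to the vertices of a closed neighborhood. -/
def dirs : List (ℤ × ℤ) := [(0, 0), (1, 0), (-1, 0), (0, 1), (0, -1)]

/-- Displacement of the guard in position `z` of a boundary block when the pattern position of the
block changes from `p` to `q`, by matching guards in increasing order. If the move crosses the side
(`cross = true`), the guard at `p` and the target `q` are left out. -/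
def slide (cross : Bool) (p q z : ℕ) : ℤ :=
  let l := if cross then ((block p).erase p).zip ((block q).erase q) else (block p).zip (block q)
  ((l.lookup z).getD 0 : ℤ) - z

/-- Displacement of the guard at `(x, y)` when configuration `(e, t)` changes to `(!e, t')`. On a
side, the move is a crossing when the neighbor in the interior of the new pattern position belongs
to the old pattern. -/
def move (e : Bool) (t t' x y : ℕ) : ℤ × ℤ :=
  if x = 0 ∨ x = 6 then
    if y = 0 ∨ y = 6 then (0, 0) else
      let p := rowOf e t x
      let q := rowOf (!e) t' x
      let cross := pat e t (if x = 0 then 1 else 5) q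
      if cross ∧ y = p then (if x = 0 then 1 else -1, 0) else (0, slide cross p q y)
  else if y = 0 ∨ y = 6 then
    let p := colOf e t y
    let q := colOf (!e) t' y
    let cross := pat e t q (if y = 0 then 1 else 5)
    if cross ∧ x = p then (0, if y = 0 then 1 else -1) else (slide cross p q x, 0)
  else
    -- Adding `5` keeps the shifted coordinates natural numbers without changing their residues.
    (dirs.find? fun d => pat (!e) t' ((x : ℤ) + 5 + d.1).toNat ((y : ℤ) + 5 + d.2).toNat).getD (0, 0)

/-- The possible folded coordinates after a step `d` from a vertex with folded coordinate `c`; the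
empty list signals a step that leaves the path or is longer than one. -/
def next (c : ℕ) (d : ℤ) : List ℕ :=
  if d = 0 then [c]
  else if d = 1 then (if c = 5 then [1, 6] else if c = 6 then [] else [c + 1])
  else if d = -1 then (if c = 1 then [5, 0] else if c = 0 then [] else [c - 1])
  else []

/-- The displacement `d` is a legal step from the folded vertex `(x, y)`, wherever that vertex
comes from, and all folded vertices where it can end satisfy `P`. -/
def AllNext (x y : ℕ) (d : ℤ × ℤ) (P : ℕ → ℕ → Prop) : Prop :=
  d ∈ dirs ∧ next x d.1 ≠ [] ∧ next y d.2 ≠ [] ∧ ∀ x' ∈ next x d.1, ∀ y' ∈ next y d.2, P x' y'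

instance (x y : ℕ) (d : ℤ × ℤ) (P : ℕ → ℕ → Prop) [∀ x' y', Decidable (P x' y')] :
    Decidable (AllNext x y d P) := by unfold AllNext; infer_instance

theorem occ_dominates : ∀ e : Bool, ∀ t < 5, ∀ x < 7, ∀ y < 7,
    ∃ d ∈ dirs, AllNext x y d fun x' y' => occ e t x' y' = true := by
  decide +kernel

set_option synthInstance.maxSize 1000 in
/-- Moves lead to guarded vertices of the new configuration, and the move back is the inverse. -/
theorem move_spec : ∀ e : Bool, ∀ t < 5, ∀ t' < 5, ∀ x < 7, ∀ y < 7, occ e t x y = true →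
    AllNext x y (move e t t' x y) fun x' y' =>
      occ (!e) t' x' y' = true ∧ move (!e) t' t x' y' = -move e t t' x y := by
  decide +kernel

theorem occ_attack : ∀ e : Bool, ∀ x < 7, ∀ y < 7, ∃ t < 5, occ e t x y = true := by
  decide +kernel

/-! ### Unfolding to the large grid -/

/-- Folds the path `{0, …, 5a + 1}` to `{0, …, 6}`: the ends go to `0` and `6`, the rest is reduced
modulo `5` to `{1, …, 5}`. -/
def fold (a x : ℕ) : ℕ := if x = 0 then 0 else if x = 5 * a + 1 then 6 else (x - 1) % 5 + 1

theorem fold_lt (a x : ℕ) : fold a x < 7 := by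
  unfold fold; split_ifs <;> omega

theorem fold_next (a : ℕ) [NeZero a] (x : Fin (5 * a + 2)) (d : ℤ) (h : next (fold a x) d ≠ []) :
    ∃ x' : Fin (5 * a + 2), (x' : ℤ) = x + d ∧ fold a x' ∈ next (fold a x) d := by
  obtain ⟨x, hx⟩ := x
  have ha : 0 < a := Nat.pos_of_neZero a
  have hd : d = 0 ∨ d = 1 ∨ d = -1 := by
    by_contra hc
    push Not at hc
    exact h (by simp [next, hc])
  rcases hd with rfl | rfl | rfl
  · exact ⟨⟨x, hx⟩, by simp, by simp [next]⟩
  · have h6 : x ≠ 5 * a + 1 := by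
      rintro rfl
      exact h (by simp [next, fold])
    refine ⟨⟨x + 1, by omega⟩, by simp, ?_⟩
    have hs : ∀ c, next c 1 = if c = 5 then [1, 6] else if c = 6 then [] else [c + 1] :=
      fun c => rfl
    rcases x with - | x
    · simp [hs, fold, ha.ne']
    · simp only [hs, fold, Nat.add_sub_cancel]
      split_ifs <;> simp <;> omega
  · obtain ⟨x, rfl⟩ : ∃ k, x = k + 1 := by
      refine Nat.exists_eq_succ_of_ne_zero ?_
      rintro rfl
      exact h (by simp [next, fold])
    refine ⟨⟨x, by omega⟩, by simp, ?_⟩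
    have hs : ∀ c, next c (-1) = if c = 1 then [5, 0] else if c = 0 then [] else [c - 1] :=
      fun c => rfl
    simp only [hs, fold, Nat.add_sub_cancel]
    rcases x with - | x
    · simp [ha.ne']
    · simp only [Nat.add_sub_cancel]
      split_ifs <;> simp <;> omega

variable {a b : ℕ}

/-- The configuration `(e, t)` on the grid. -/
def conf (a b : ℕ) (e : Bool) (t : ℕ) : Set (Fin (5 * a + 2) × Fin (5 * b + 2)) :=
  {v | occ e t (fold a v.1) (fold b v.2) = true}

/-- The displacement of the guard at `v` when configuration `(e, t)` changes to `(!e, t')`. -/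
def disp (e : Bool) (t t' : ℕ) (v : Fin (5 * a + 2) × Fin (5 * b + 2)) : ℤ × ℤ :=
  move e t t' (fold a v.1) (fold b v.2)

/-- `w` is obtained from `v` by the displacement `d`. -/
def Shift (v w : Fin (5 * a + 2) × Fin (5 * b + 2)) (d : ℤ × ℤ) : Prop :=
  (w.1 : ℤ) = v.1 + d.1 ∧ (w.2 : ℤ) = v.2 + d.2

theorem Shift.unique {v w w' : Fin (5 * a + 2) × Fin (5 * b + 2)} {d : ℤ × ℤ}
    (h : Shift v w d) (h' : Shift v w' d) : w = w' := by
  obtain ⟨h1, h2⟩ := h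
  obtain ⟨h1', h2'⟩ := h'
  ext <;> omega

theorem Shift.reverse {v w : Fin (5 * a + 2) × Fin (5 * b + 2)} {d : ℤ × ℤ}
    (h : Shift v w d) : Shift w v (-d) := by
  obtain ⟨h1, h2⟩ := h
  constructor
  · rw [Prod.fst_neg]; omega
  · rw [Prod.snd_neg]; omega

theorem Shift.adj {v w : Fin (5 * a + 2) × Fin (5 * b + 2)} {d : ℤ × ℤ}
    (h : Shift v w d) (hd : d ∈ dirs) : w = v ∨ GridAdj (5 * a + 2) (5 * b + 2) v w := by
  obtain ⟨h1, h2⟩ := h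
  unfold GridAdj
  rw [h1, h2]
  simp only [dirs, List.mem_cons, List.not_mem_nil, or_false] at hd
  rcases hd with rfl | rfl | rfl | rfl | rfl
  · left
    ext <;> omega
  all_goals right; simp

theorem AllNext.exists_shift [NeZero a] [NeZero b] {v : Fin (5 * a + 2) × Fin (5 * b + 2)} {d : ℤ × ℤ}
    {P : ℕ → ℕ → Prop} (h : AllNext (fold a v.1) (fold b v.2) d P) :
    ∃ w, Shift v w d ∧ P (fold a w.1) (fold b w.2) := by
  obtain ⟨-, hx, hy, hP⟩ := h
  obtain ⟨x', hx1, hx2⟩ := fold_next a v.1 d.1 hx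
  obtain ⟨y', hy1, hy2⟩ := fold_next b v.2 d.2 hy
  exact ⟨(x', y'), ⟨hx1, hy1⟩, hP _ hx2 _ hy2⟩

theorem conf_dominating [NeZero a] [NeZero b] (e : Bool) {t : ℕ} (ht : t < 5) :
    GridDominating (5 * a + 2) (5 * b + 2) (conf a b e t) := by
  intro v
  obtain ⟨d, hd, h⟩ := occ_dominates e t ht _ (fold_lt a v.1) _ (fold_lt b v.2)
  obtain ⟨w, hw, hP⟩ := h.exists_shift
  exact ⟨w, hP, hw.adj hd⟩

theorem exists_move [NeZero a] [NeZero b] (e : Bool) {t t' : ℕ} (ht : t < 5) (ht' : t' < 5)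
    {v : Fin (5 * a + 2) × Fin (5 * b + 2)} (hv : v ∈ conf a b e t) :
    ∃ w ∈ conf a b (!e) t', Shift v w (disp e t t' v) ∧ Shift w v (disp (!e) t' t w) ∧
      (w = v ∨ GridAdj (5 * a + 2) (5 * b + 2) v w) := by
  have h := move_spec e t ht t' ht' _ (fold_lt a v.1) _ (fold_lt b v.2) hv
  obtain ⟨w, hw, hP, hinv⟩ := h.exists_shift
  refine ⟨w, hP, hw, ?_, hw.adj h.1⟩
  rw [disp, hinv]
  exact hw.reverse

theorem exists_bijOn [NeZero a] [NeZero b] (e : Bool) {t t' : ℕ} (ht : t < 5) (ht' : t' < 5) :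
    ∃ σ : Fin (5 * a + 2) × Fin (5 * b + 2) → Fin (5 * a + 2) × Fin (5 * b + 2),
      Set.BijOn σ (conf a b e t) (conf a b (!e) t') ∧
      ∀ v ∈ conf a b e t, σ v = v ∨ GridAdj (5 * a + 2) (5 * b + 2) v (σ v) := by
  classical
  choose! σ h1 h2 h3 h4 using fun v => exists_move (a := a) (b := b) e ht ht' (v := v)
  refine ⟨σ, ⟨h1, ?_, ?_⟩, h4⟩
  · intro v hv v' hv' heq
    have h := h3 v hv
    rw [heq] at h
    exact h.unique (h3 v' hv')
  · intro w hw
    obtain ⟨v, hv, -, hvw, -⟩ := exists_move (!e) ht' ht hw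
    rw [Bool.not_not] at hv hvw
    exact ⟨v, hv, (h2 v hv).unique hvw⟩

/-! ### Counting guards -/

theorem sum_mod_five (g : ℕ → ℕ) (a : ℕ) :
    ∑ x ∈ Finset.range (5 * a), g (x % 5 + 1) = a * (g 1 + g 2 + g 3 + g 4 + g 5) := by
  induction a with
  | zero => simp
  | succ a ih =>
    rw [show 5 * (a + 1) = 5 * a + 1 + 1 + 1 + 1 + 1 by ring]
    simp only [Finset.sum_range_succ, ih]
    rw [show 5 * a % 5 = 0 by omega, show (5 * a + 1) % 5 = 1 by omega,
      show (5 * a + 1 + 1) % 5 = 2 by omega, show (5 * a + 1 + 1 + 1) % 5 = 3 by omega,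
      show (5 * a + 1 + 1 + 1 + 1) % 5 = 4 by omega]
    ring

/-- Apart from the ends, every fiber of the folding map has `a` elements. -/
theorem sum_fold (g : ℕ → ℕ) (a : ℕ) :
    ∑ x : Fin (5 * a + 2), g (fold a x) = g 0 + a * (g 1 + g 2 + g 3 + g 4 + g 5) + g 6 := by
  rw [Fin.sum_univ_eq_sum_range (fun x => g (fold a x)), Finset.sum_range_succ,
    Finset.sum_range_succ']
  have h : ∀ x ∈ Finset.range (5 * a), g (fold a (x + 1)) = g (x % 5 + 1) := by
    intro x hx
    have := Finset.mem_range.1 hx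
    rw [fold, if_neg (by omega), if_neg (by omega), Nat.add_sub_cancel]
  rw [Finset.sum_congr rfl h, sum_mod_five]
  simp [fold]
  ring

/-- The indicator function of `occ`. -/
def ind (e : Bool) (t x y : ℕ) : ℕ := if occ e t x y then 1 else 0

theorem ind_counts : ∀ e : Bool, ∀ t < 5,
    (ind e t 0 0 = 1 ∧ ind e t 0 6 = 1 ∧ ind e t 6 0 = 1 ∧ ind e t 6 6 = 1) ∧
    (∀ x ∈ [0, 6], ind e t x 1 + ind e t x 2 + ind e t x 3 + ind e t x 4 + ind e t x 5 = 3) ∧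
    (∀ y ∈ [0, 6], ind e t 1 y + ind e t 2 y + ind e t 3 y + ind e t 4 y + ind e t 5 y = 3) ∧
    (∀ x ∈ [1, 2, 3, 4, 5],
      ind e t x 1 + ind e t x 2 + ind e t x 3 + ind e t x 4 + ind e t x 5 = 1) := by
  decide +kernel

theorem conf_ncard (e : Bool) {t : ℕ} (ht : t < 5) :
    (conf a b e t).ncard = 5 * a * b + 6 * a + 6 * b + 4 := by
  classical
  have h : (conf a b e t).ncard = ∑ x : Fin (5 * a + 2), ∑ y : Fin (5 * b + 2),
      ind e t (fold a x) (fold b y) := by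
    have hS : conf a b e t = (Finset.univ.filter fun v : Fin (5 * a + 2) × Fin (5 * b + 2) =>
        occ e t (fold a v.1) (fold b v.2) = true : Finset _) := by
      ext v
      simp [conf]
    rw [hS, Set.ncard_coe_finset, ← Fintype.sum_prod_type'
      (f := fun (x : Fin (5 * a + 2)) (y : Fin (5 * b + 2)) => ind e t (fold a x) (fold b y)),
      Finset.card_eq_sum_ones]
    simp only [ind, Finset.sum_filter]
  rw [h]
  have hb : ∀ x, _ := fun x => sum_fold (fun y => ind e t x y) b
  simp only [hb]
  rw [sum_fold (fun x => ind e t x 0 + b * (ind e t x 1 + ind e t x 2 + ind e t x 3 + ind e t x 4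
    + ind e t x 5) + ind e t x 6) a]
  obtain ⟨⟨h1, h2, h3, h4⟩, hv, hh, hi⟩ := ind_counts e t ht
  simp only [List.forall_mem_cons, List.not_mem_nil, false_imp_iff, implies_true, and_true]
    at hv hh hi
  obtain ⟨hv0, hv6⟩ := hv
  obtain ⟨hh0, hh6⟩ := hh
  obtain ⟨i1, i2, i3, i4, i5⟩ := hi
  rw [hv0, hv6, i1, i2, i3, i4, i5, h1, h2, h3, h4]
  linear_combination a * hh0 + a * hh6

end EternalGrid

/-- Improved upper bound (partial boundary cover): for `m, n ≥ 7` with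
`m ≡ n ≡ 2 (mod 5)` there is an eternal dominating family for `P_m □ P_n` all of
whose members have cardinality `(mn + 4(m+n))/5`; consequently
`γ^∞(P_m □ P_n) ≤ mn/5 + (4/5)(m+n)`. -/
theorem eternal_domination_partial_boundary (m n : ℕ) (hm : 7 ≤ m) (hn : 7 ≤ n)
    (hm5 : m % 5 = 2) (hn5 : n % 5 = 2) :
    ∃ 𝒮 : Set (Set (Fin m × Fin n)),
      EternalDominatingFamily m n 𝒮 ∧
      ∀ S ∈ 𝒮, S.ncard = (m * n + 4 * (m + n)) / 5 := by
  obtain ⟨a, rfl⟩ : ∃ a, m = 5 * a + 2 := ⟨m / 5, by omega⟩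
  obtain ⟨b, rfl⟩ : ∃ b, n = 5 * b + 2 := ⟨n / 5, by omega⟩
  have : NeZero a := ⟨by omega⟩
  have : NeZero b := ⟨by omega⟩
  refine ⟨{S | ∃ e, ∃ t < 5, S = EternalGrid.conf a b e t},
    ⟨⟨_, true, 0, by norm_num, rfl⟩, ?_, ?_⟩, ?_⟩
  · rintro S ⟨e, t, ht, rfl⟩
    exact EternalGrid.conf_dominating e ht
  · rintro S ⟨e, t, ht, rfl⟩ v -
    obtain ⟨t', ht', hv⟩ := EternalGrid.occ_attack (!e) _ (EternalGrid.fold_lt a v.1) _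
      (EternalGrid.fold_lt b v.2)
    exact ⟨_, ⟨!e, t', ht', rfl⟩, hv, EternalGrid.exists_bijOn e ht ht'⟩
  · rintro S ⟨e, t, ht, rfl⟩
    rw [EternalGrid.conf_ncard e ht]
    have h : (5 * a + 2) * (5 * b + 2) + 4 * (5 * a + 2 + (5 * b + 2))
        = (5 * a * b + 6 * a + 6 * b + 4) * 5 := by ring
    rw [h, Nat.mul_div_cancel _ (by norm_num)]
end

section
/- (General upper bound.) There exists a constant C ∈ ℕ such that for all integers m, n ≥ 7 there exists an eternal dominating family for P_m□P_n all of whose members have a common cardinality k satisfying 5k ≤ mn + C·(m+n); consequently γ^∞(P_m□P_n) ≤ mn/5 + O(m+n). -/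
namespace EternalGrid

/-! ### The move on the integer lattice -/

/-- The vertex `(x, y)` carries a guard in the configuration of the first family: it lies outside
the box `[1, 5p] × [1, 5q]` or in the class `x + 2y ≡ t` modulo `5`. -/
def OnA (p q t : ℤ) (v : ℤ × ℤ) : Prop :=
  ¬ (1 ≤ v.1 ∧ v.1 ≤ 5 * p ∧ 1 ≤ v.2 ∧ v.2 ≤ 5 * q) ∨ (v.1 + 2 * v.2 - t) % 5 = 0

/-- The vertex `(x, y)` carries a guard in the configuration of the second family: it lies outside
the box `[1, 5p] × [1, 5q]` or in the class `x - 2y ≡ s` modulo `5`. -/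
def OnB (p q s : ℤ) (v : ℤ × ℤ) : Prop :=
  ¬ (1 ≤ v.1 ∧ v.1 ≤ 5 * p ∧ 1 ≤ v.2 ∧ v.2 ≤ 5 * q) ∨ (v.1 - 2 * v.2 - s) % 5 = 0

/-- The reflection `y ↦ 5q + 1 - y`, which preserves the box `[1, 5p] × [1, 5q]`. -/
def reflect (q : ℤ) (v : ℤ × ℤ) : ℤ × ℤ := (v.1, 5 * q + 1 - v.2)

/-- The move taking the configuration `OnA` with `t = a + 2b` to `OnB` with `s = a - 2b`. Inside the
box the direction depends on `y - b` modulo `5`. The four remaining main branches are the lines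
adjacent to the right, left, upper and lower side of the box. Guards cross the vertical sides only
if `a ≡ 3`, and the horizontal ones only if `b ≡ 3`. On an adjacent line, the guard beside the
entry steps into the box, and the guards from the exit up to the entry, within the same segment of
length five, advance by one; which of the two lies first in the segment is decided by the test
`2 ≤ b % 5`, respectively `2 ≤ a % 5`. -/
def guardMove (p q a b : ℤ) (v : ℤ × ℤ) : ℤ × ℤ :=
  if 1 ≤ v.1 ∧ v.1 ≤ 5 * p ∧ 1 ≤ v.2 ∧ v.2 ≤ 5 * q then
    if (v.2 - b) % 5 = 1 then (v.1 - 1, v.2)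
    else if (v.2 - b) % 5 = 2 then (v.1, v.2 + 1)
    else if (v.2 - b) % 5 = 3 then (v.1, v.2 - 1)
    else if (v.2 - b) % 5 = 4 then (v.1 + 1, v.2)
    else v
  else if a % 5 = 3 ∧ v.1 = 5 * p + 1 ∧ 1 ≤ v.2 ∧ v.2 ≤ 5 * q then
    if (v.2 - b) % 5 = 1 then (v.1 - 1, v.2)
    else if 2 ≤ b % 5 then
      if (v.2 - b) % 5 = 4 ∨ (v.2 - b) % 5 = 0 then (v.1, v.2 + 1) else v
    else
      if 2 ≤ (v.2 - b) % 5 then (v.1, v.2 - 1) else v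
  else if a % 5 = 3 ∧ v.1 = 0 ∧ 1 ≤ v.2 ∧ v.2 ≤ 5 * q then
    if (v.2 - b) % 5 = 4 then (v.1 + 1, v.2)
    else if 2 ≤ b % 5 then
      if (v.2 - b) % 5 = 1 ∨ (v.2 - b) % 5 = 0 then (v.1, v.2 - 1) else v
    else
      if 1 ≤ (v.2 - b) % 5 then (v.1, v.2 + 1) else v
  else if b % 5 = 3 ∧ v.2 = 5 * q + 1 ∧ 1 ≤ v.1 ∧ v.1 ≤ 5 * p then
    if (v.1 - a) % 5 = 4 then (v.1, v.2 - 1)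
    else if 2 ≤ a % 5 then
      if (v.1 - a) % 5 = 1 ∨ (v.1 - a) % 5 = 0 then (v.1 - 1, v.2) else v
    else
      if 1 ≤ (v.1 - a) % 5 then (v.1 + 1, v.2) else v
  else if b % 5 = 3 ∧ v.2 = 0 ∧ 1 ≤ v.1 ∧ v.1 ≤ 5 * p then
    if (v.1 - a) % 5 = 1 then (v.1, v.2 + 1)
    else if 2 ≤ a % 5 then
      if (v.1 - a) % 5 = 4 ∨ (v.1 - a) % 5 = 0 then (v.1 + 1, v.2) else v
    else
      if 2 ≤ (v.1 - a) % 5 then (v.1 - 1, v.2) else v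
  else v

theorem guardMove_near (p q a b : ℤ) (v : ℤ × ℤ) :
    guardMove p q a b v = v ∨
      |v.1 - (guardMove p q a b v).1| + |v.2 - (guardMove p q a b v).2| = 1 := by
  unfold guardMove
  split_ifs <;> simp

theorem guardMove_mem_grid {p q a b m n : ℤ} {v : ℤ × ℤ} (hp : 0 ≤ p)
    (hq : 0 ≤ q) (hm : 5 * p + 2 ≤ m) (hn : 5 * q + 2 ≤ n)
    (hv : (0 ≤ v.1 ∧ v.1 < m) ∧ 0 ≤ v.2 ∧ v.2 < n) :
    (0 ≤ (guardMove p q a b v).1 ∧ (guardMove p q a b v).1 < m) ∧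
      0 ≤ (guardMove p q a b v).2 ∧ (guardMove p q a b v).2 < n := by
  unfold guardMove
  split_ifs <;> try dsimp only
  all_goals omega

theorem guardMove_onB {p q a b t s : ℤ} {v : ℤ × ℤ} (ht : (a + 2 * b - t) % 5 = 0)
    (hs : (a - 2 * b - s) % 5 = 0) (hv : OnA p q t v) : OnB p q s (guardMove p q a b v) := by
  unfold OnA at hv
  unfold OnB guardMove
  split_ifs <;> try dsimp only
  all_goals omega

set_option maxHeartbeats 8000000 in
set_option linter.unusedSimpArgs false in
/-- After reflection, the move with parameters `(a, 1 - b)` undoes the move with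
parameters `(a, b)`. -/
theorem guardMove_reflect {p q a b t : ℤ} {v : ℤ × ℤ} (hp : 1 ≤ p) (hq : 1 ≤ q)
    (ht : (a + 2 * b - t) % 5 = 0) (hv : OnA p q t v) :
    guardMove p q a (1 - b) (reflect q (guardMove p q a b v)) = reflect q v := by
  obtain ⟨x, y⟩ := v
  unfold OnA at hv
  dsimp only at hv
  -- Residues of every position reachable by one step, in terms of those of `x - a`, `y - b`, `b`.
  have E0 : (5 * q + 1 - y - (1 - b)) % 5 = (5 - (y - b) % 5) % 5 := by omega
  have E1 : (5 * q + 1 - (y + 1) - (1 - b)) % 5 = (4 - (y - b) % 5) % 5 := by omega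
  have E2 : (5 * q + 1 - (y - 1) - (1 - b)) % 5 = (6 - (y - b) % 5) % 5 := by omega
  have F1 : (x + 1 - a) % 5 = ((x - a) % 5 + 1) % 5 := by omega
  have F2 : (x - 1 - a) % 5 = ((x - a) % 5 + 4) % 5 := by omega
  have G : (1 - b) % 5 = (6 - b % 5) % 5 := by omega
  by_cases hbox : 1 ≤ x ∧ x ≤ 5 * p ∧ 1 ≤ y ∧ y ≤ 5 * q
  -- Inside the box, `y - b` determines `x - a` modulo `5`, so there are only five kinds of guards.
  · have hu' : (x - a) % 5 = 3 * ((y - b) % 5) % 5 := by omega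
    have hw : (y - b) % 5 = 0 ∨ (y - b) % 5 = 1 ∨ (y - b) % 5 = 2 ∨ (y - b) % 5 = 3 ∨
      (y - b) % 5 = 4 := by omega
    rcases hw with hw | hw | hw | hw | hw <;> rw [hw] at hu' <;> norm_num at hu' <;>
      simp only [guardMove, reflect, E0, E1, E2, F1, F2, G, hu', hw, hbox,
        and_self, true_and, false_and,
        and_true, and_false, if_true, if_false, Int.reduceEq, Int.reduceLE, Int.reduceMod,
        Int.reduceAdd, Int.reduceSub, or_true, true_or, or_false, false_or] <;>
      clear ht hv E0 E1 E2 F1 F2 G <;> split_ifs <;>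
      simp only [Prod.mk.injEq, and_true, true_and] <;> omega
  -- On the lines beside the box, the residue across the line is forced, while the residue along it
  -- and that of `b` or `a`, which fixes the order of exit and entry, range over all values.
  by_cases hR : a % 5 = 3 ∧ x = 5 * p + 1 ∧ 1 ≤ y ∧ y ≤ 5 * q
  · obtain ⟨ha3, hx, hy1, hy2⟩ := hR
    have N : ¬ (x ≤ 5 * p) := by omega
    have hu' : (x - a) % 5 = 3 := by omega
    have hw : (y - b) % 5 = 0 ∨ (y - b) % 5 = 1 ∨ (y - b) % 5 = 2 ∨ (y - b) % 5 = 3 ∨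
      (y - b) % 5 = 4 := by omega
    have hb : b % 5 = 0 ∨ b % 5 = 1 ∨ b % 5 = 2 ∨ b % 5 = 3 ∨ b % 5 = 4 := by omega
    rcases hw with hw | hw | hw | hw | hw <;> rcases hb with hb | hb | hb | hb | hb <;>
      simp only [guardMove, reflect, E0, E1, E2, F1, F2, G, hu', hw, hb, N, ha3,
        eq_true hx, hy1, hy2, and_self, true_and, false_and,
        and_true, and_false, if_true, if_false, Int.reduceEq, Int.reduceLE, Int.reduceMod,
        Int.reduceAdd, Int.reduceSub, or_true, true_or, or_false, false_or] <;>
      clear ht hv E0 E1 E2 F1 F2 G <;> split_ifs <;>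
      simp only [Prod.mk.injEq, and_true, true_and] <;> omega
  by_cases hL : a % 5 = 3 ∧ x = 0 ∧ 1 ≤ y ∧ y ≤ 5 * q
  · obtain ⟨ha3, hx, hy1, hy2⟩ := hL
    have N : ¬ (1 ≤ x) := by omega
    have N' : ¬ (x = 5 * p + 1) := by omega
    have hu' : (x - a) % 5 = 2 := by omega
    have hw : (y - b) % 5 = 0 ∨ (y - b) % 5 = 1 ∨ (y - b) % 5 = 2 ∨ (y - b) % 5 = 3 ∨
      (y - b) % 5 = 4 := by omega
    have hb : b % 5 = 0 ∨ b % 5 = 1 ∨ b % 5 = 2 ∨ b % 5 = 3 ∨ b % 5 = 4 := by omega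
    rcases hw with hw | hw | hw | hw | hw <;> rcases hb with hb | hb | hb | hb | hb <;>
      simp only [guardMove, reflect, E0, E1, E2, F1, F2, G, hu', hw, hb, N, N',
        ha3, eq_true hx, hy1, hy2, and_self, true_and, false_and,
        and_true, and_false, if_true, if_false, Int.reduceEq, Int.reduceLE, Int.reduceMod,
        Int.reduceAdd, Int.reduceSub, or_true, true_or, or_false, false_or] <;>
      clear ht hv E0 E1 E2 F1 F2 G <;> split_ifs <;>
      simp only [Prod.mk.injEq, and_true, true_and] <;> omega
  by_cases hU : b % 5 = 3 ∧ y = 5 * q + 1 ∧ 1 ≤ x ∧ x ≤ 5 * p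
  · obtain ⟨hb3, hy, hx1, hx2⟩ := hU
    have N : ¬ (y ≤ 5 * q) := by omega
    have hw' : (y - b) % 5 = 3 := by omega
    have hu : (x - a) % 5 = 0 ∨ (x - a) % 5 = 1 ∨ (x - a) % 5 = 2 ∨ (x - a) % 5 = 3 ∨
      (x - a) % 5 = 4 := by omega
    have ha : a % 5 = 0 ∨ a % 5 = 1 ∨ a % 5 = 2 ∨ a % 5 = 3 ∨ a % 5 = 4 := by omega
    rcases hu with hu | hu | hu | hu | hu <;> rcases ha with ha | ha | ha | ha | ha <;>
      simp only [guardMove, reflect, E0, E1, E2, F1, F2, G, hu, hw', ha, N, hb3,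
        eq_true hy, hx1, hx2, and_self, true_and, false_and,
        and_true, and_false, if_true, if_false, Int.reduceEq, Int.reduceLE, Int.reduceMod,
        Int.reduceAdd, Int.reduceSub, or_true, true_or, or_false, false_or] <;>
      clear ht hv E0 E1 E2 F1 F2 G <;> split_ifs <;>
      simp only [Prod.mk.injEq, and_true, true_and] <;> omega
  by_cases hD : b % 5 = 3 ∧ y = 0 ∧ 1 ≤ x ∧ x ≤ 5 * p
  · obtain ⟨hb3, hy, hx1, hx2⟩ := hD
    have N : ¬ (1 ≤ y) := by omega
    have N' : ¬ (y = 5 * q + 1) := by omega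
    have hw' : (y - b) % 5 = 2 := by omega
    have hu : (x - a) % 5 = 0 ∨ (x - a) % 5 = 1 ∨ (x - a) % 5 = 2 ∨ (x - a) % 5 = 3 ∨
      (x - a) % 5 = 4 := by omega
    have ha : a % 5 = 0 ∨ a % 5 = 1 ∨ a % 5 = 2 ∨ a % 5 = 3 ∨ a % 5 = 4 := by omega
    rcases hu with hu | hu | hu | hu | hu <;> rcases ha with ha | ha | ha | ha | ha <;>
      simp only [guardMove, reflect, E0, E1, E2, F1, F2, G, hu, hw', ha, N, N',
        hb3, eq_true hy, hx1, hx2, and_self, true_and, false_and,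
        and_true, and_false, if_true, if_false, Int.reduceEq, Int.reduceLE, Int.reduceMod,
        Int.reduceAdd, Int.reduceSub, or_true, true_or, or_false, false_or] <;>
      clear ht hv E0 E1 E2 F1 F2 G <;> split_ifs <;>
      simp only [Prod.mk.injEq, and_true, true_and] <;> omega
  have hstay : guardMove p q a b (x, y) = (x, y) := by
    simp only [guardMove, hbox, hR, hL, hU, hD, if_false]
  rw [hstay]
  dsimp only [reflect, guardMove]
  rw [if_neg (by omega), if_neg (by omega), if_neg (by omega), if_neg (by omega),
    if_neg (by omega)]

/-! ### The inverse move -/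

theorem onA_reflect {p q t s : ℤ} {v : ℤ × ℤ} (hts : (s + 2 - t) % 5 = 0) (hv : OnB p q s v) :
    OnA p q t (reflect q v) := by
  unfold OnB at hv
  unfold OnA reflect
  dsimp only
  omega

theorem onB_reflect {p q t s : ℤ} {v : ℤ × ℤ} (hts : (t - 2 - s) % 5 = 0) (hv : OnA p q t v) :
    OnB p q s (reflect q v) := by
  unfold OnA at hv
  unfold OnB reflect
  dsimp only
  omega

theorem reflect_reflect (q : ℤ) (v : ℤ × ℤ) : reflect q (reflect q v) = v := by
  ext <;> simp [reflect]

/-- The inverse of `guardMove p q a b` on configurations of the second family. -/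
def guardUndo (p q a b : ℤ) (v : ℤ × ℤ) : ℤ × ℤ :=
  reflect q (guardMove p q a (1 - b) (reflect q v))

theorem guardUndo_near (p q a b : ℤ) (v : ℤ × ℤ) :
    guardUndo p q a b v = v ∨
      |v.1 - (guardUndo p q a b v).1| + |v.2 - (guardUndo p q a b v).2| = 1 := by
  unfold guardUndo
  rcases guardMove_near p q a (1 - b) (reflect q v) with h | h
  · left
    rw [h, reflect_reflect]
  · right
    rw [abs_sub_comm v.2]
    simp only [reflect] at h ⊢
    convert h using 3
    ring

theorem guardUndo_mem_grid {p q a b m n : ℤ} {v : ℤ × ℤ} (hp : 0 ≤ p) (hq : 0 ≤ q)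
    (hm : 5 * p + 2 ≤ m) (hn : 5 * q + 2 ≤ n)
    (hv : (0 ≤ v.1 ∧ v.1 < m) ∧ 0 ≤ v.2 ∧ v.2 < n) :
    (0 ≤ (guardUndo p q a b v).1 ∧ (guardUndo p q a b v).1 < m) ∧
      0 ≤ (guardUndo p q a b v).2 ∧ (guardUndo p q a b v).2 < n := by
  unfold guardUndo guardMove reflect
  dsimp only
  split_ifs <;> dsimp only <;> omega

/-! ### Configurations on the finite grid -/

/-- The grid vertex as a point of the integer lattice. -/
def toLattice {m n : ℕ} (v : Fin m × Fin n) : ℤ × ℤ := ((v.1 : ℕ), (v.2 : ℕ))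

theorem toLattice_injective {m n : ℕ} : Function.Injective (@toLattice m n) := by
  rintro ⟨x, y⟩ ⟨z, w⟩ h
  simp only [toLattice, Prod.mk.injEq, Nat.cast_inj] at h
  exact Prod.ext (Fin.ext h.1) (Fin.ext h.2)

theorem toLattice_mem {m n : ℕ} (v : Fin m × Fin n) :
    (0 ≤ (toLattice v).1 ∧ (toLattice v).1 < m) ∧ 0 ≤ (toLattice v).2 ∧ (toLattice v).2 < n := by
  simp [toLattice]

theorem exists_toLattice_eq {m n : ℕ} {w : ℤ × ℤ}
    (hw : (0 ≤ w.1 ∧ w.1 < m) ∧ 0 ≤ w.2 ∧ w.2 < n) :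
    ∃ v : Fin m × Fin n, toLattice v = w := by
  refine ⟨(⟨w.1.toNat, by omega⟩, ⟨w.2.toNat, by omega⟩), ?_⟩
  ext <;> simp only [toLattice] <;> omega

/-- The configuration of the first family with class `t`, as a set of grid vertices. -/
def confA (m n : ℕ) (p q t : ℤ) : Set (Fin m × Fin n) := {v | OnA p q t (toLattice v)}

/-- The configuration of the second family with class `s`, as a set of grid vertices. -/
def confB (m n : ℕ) (p q s : ℤ) : Set (Fin m × Fin n) := {v | OnB p q s (toLattice v)}

/-- Any configuration of the first family can be exchanged with any configuration of the second
one, in both directions, with every guard moving by at most one step. -/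
theorem exists_exchange {m n : ℕ} {p q : ℤ} (hp : 1 ≤ p) (hq : 1 ≤ q) (hm : 5 * p + 2 ≤ m)
    (hn : 5 * q + 2 ≤ n) (t s : ℤ) :
    ∃ σ τ : Fin m × Fin n → Fin m × Fin n,
      Set.BijOn σ (confA m n p q t) (confB m n p q s) ∧
      Set.BijOn τ (confB m n p q s) (confA m n p q t) ∧
      (∀ v, σ v = v ∨ GridAdj m n v (σ v)) ∧ ∀ v, τ v = v ∨ GridAdj m n v (τ v) := by
  -- `a` and `b` solve `a + 2b ≡ t` and `a - 2b ≡ s` modulo `5`.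
  obtain ⟨a, ha⟩ : ∃ a, a = 3 * (t + s) := ⟨_, rfl⟩
  obtain ⟨b, hb⟩ : ∃ b, b = s - t := ⟨_, rfl⟩
  have hσ : ∀ v : Fin m × Fin n, ∃ w : Fin m × Fin n,
      toLattice w = guardMove p q a b (toLattice v) := fun v =>
    exists_toLattice_eq (guardMove_mem_grid (by omega) (by omega) hm hn (toLattice_mem v))
  have hτ : ∀ v : Fin m × Fin n, ∃ w : Fin m × Fin n,
      toLattice w = guardUndo p q a b (toLattice v) := fun v =>
    exists_toLattice_eq (guardUndo_mem_grid (by omega) (by omega) hm hn (toLattice_mem v))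
  choose σ hσ using hσ
  choose τ hτ using hτ
  have hmapσ : Set.MapsTo σ (confA m n p q t) (confB m n p q s) := by
    intro v hv
    change OnB p q s (toLattice (σ v))
    rw [hσ]
    exact guardMove_onB (t := t) (by omega) (by omega) hv
  have hmapτ : Set.MapsTo τ (confB m n p q s) (confA m n p q t) := by
    intro v hv
    change OnA p q t (toLattice (τ v))
    rw [hτ]
    exact onA_reflect (s := t - 2) (by omega)
      (guardMove_onB (t := s + 2) (by omega) (by omega) (onA_reflect (by omega) hv))
  have hleft : Set.LeftInvOn τ σ (confA m n p q t) := by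
    intro v hv
    apply toLattice_injective
    rw [hτ, hσ, guardUndo, guardMove_reflect hp hq (t := t) (by omega) hv, reflect_reflect]
  have hright : Set.LeftInvOn σ τ (confB m n p q s) := by
    intro v hv
    apply toLattice_injective
    have h := guardMove_reflect (a := a) (b := 1 - b) hp hq (t := s + 2) (by omega)
      (onA_reflect (by omega) hv)
    rw [sub_sub_cancel, reflect_reflect] at h
    rw [hσ, hτ, guardUndo, h]
  refine ⟨σ, τ, Set.InvOn.bijOn ⟨hleft, hright⟩ hmapσ hmapτ,
    Set.InvOn.bijOn ⟨hright, hleft⟩ hmapτ hmapσ, fun v => ?_, fun v => ?_⟩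
  · have h := guardMove_near p q a b (toLattice v)
    rw [← hσ] at h
    exact h.imp (fun h => toLattice_injective h) id
  · have h := guardUndo_near p q a b (toLattice v)
    rw [← hτ] at h
    exact h.imp (fun h => toLattice_injective h) id

/-! ### Domination -/

/-- If `P` holds outside the box and every lattice point has a point satisfying `P` in its closed
neighborhood, then the grid vertices satisfying `P` dominate the grid: the lattice neighbors of a
box vertex all lie in the grid. -/
theorem gridDominating_of {m n : ℕ} {p q : ℤ} (hm : 5 * p + 2 ≤ m) (hn : 5 * q + 2 ≤ n)
    (P : ℤ × ℤ → Prop)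
    (hout : ∀ v : ℤ × ℤ, ¬ (1 ≤ v.1 ∧ v.1 ≤ 5 * p ∧ 1 ≤ v.2 ∧ v.2 ≤ 5 * q) → P v)
    (hin : ∀ x y : ℤ, P (x, y) ∨ P (x - 1, y) ∨ P (x + 1, y) ∨ P (x, y - 1) ∨ P (x, y + 1)) :
    GridDominating m n {v | P (toLattice v)} := by
  intro v
  by_cases hv : P (toLattice v)
  · exact ⟨v, hv, Or.inl rfl⟩
  have hbox := not_not.1 (mt (hout _) hv)
  have key : ∀ w : ℤ × ℤ, P w → |(toLattice v).1 - w.1| + |(toLattice v).2 - w.2| = 1 →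
      ((0 ≤ w.1 ∧ w.1 < m) ∧ 0 ≤ w.2 ∧ w.2 < n) →
      ∃ u ∈ {v : Fin m × Fin n | P (toLattice v)}, u = v ∨ GridAdj m n v u := by
    intro w hw hadj hmem
    obtain ⟨u, rfl⟩ := exists_toLattice_eq hmem
    exact ⟨u, hw, Or.inr hadj⟩
  rcases hin (toLattice v).1 (toLattice v).2 with h | h | h | h | h
  · exact absurd h hv
  all_goals exact key _ h (by simp) (by dsimp only; omega)

theorem confA_dominating {m n : ℕ} {p q : ℤ} (hm : 5 * p + 2 ≤ m) (hn : 5 * q + 2 ≤ n) (t : ℤ) :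
    GridDominating m n (confA m n p q t) := by
  refine gridDominating_of hm hn (OnA p q t) (fun v hv => Or.inl hv) fun x y => ?_
  have h : (x + 2 * y - t) % 5 = 0 ∨ (x - 1 + 2 * y - t) % 5 = 0 ∨ (x + 1 + 2 * y - t) % 5 = 0 ∨
    (x + 2 * (y - 1) - t) % 5 = 0 ∨ (x + 2 * (y + 1) - t) % 5 = 0 := by omega
  exact h.imp Or.inr (Or.imp Or.inr (Or.imp Or.inr (Or.imp Or.inr Or.inr)))

theorem confB_dominating {m n : ℕ} {p q : ℤ} (hm : 5 * p + 2 ≤ m) (hn : 5 * q + 2 ≤ n) (s : ℤ) :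
    GridDominating m n (confB m n p q s) := by
  refine gridDominating_of hm hn (OnB p q s) (fun v hv => Or.inl hv) fun x y => ?_
  have h : (x - 2 * y - s) % 5 = 0 ∨ (x - 1 - 2 * y - s) % 5 = 0 ∨ (x + 1 - 2 * y - s) % 5 = 0 ∨
    (x - 2 * (y - 1) - s) % 5 = 0 ∨ (x - 2 * (y + 1) - s) % 5 = 0 := by omega
  exact h.imp Or.inr (Or.imp Or.inr (Or.imp Or.inr (Or.imp Or.inr Or.inr)))

/-! ### Counting guards -/

/-- The box contributes at most one guard to each horizontal block of five consecutive vertices,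
and at most six full columns and six full rows lie outside the box. -/
theorem ncard_confA_le {m n p q : ℕ} (hm : m ≤ 5 * p + 6) (hn : n ≤ 5 * q + 6) (t : ℤ) :
    (confA m n p q t).ncard ≤ p * (5 * q) + 6 * n + m * 6 := by
  have hsub : confA m n p q t ⊆
      ({v : Fin m × Fin n | (1 ≤ v.1.val ∧ v.1.val ≤ 5 * p ∧ 1 ≤ v.2.val ∧ v.2.val ≤ 5 * q) ∧
          ((v.1.val : ℤ) + 2 * (v.2.val : ℤ) - t) % 5 = 0} ∪
        {v : Fin m × Fin n | v.1.val = 0 ∨ 5 * p < v.1.val}) ∪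
        {v : Fin m × Fin n | v.2.val = 0 ∨ 5 * q < v.2.val} := by
    rintro ⟨x, y⟩ hv
    simp only [confA, OnA, toLattice, Set.mem_ofPred_eq, Set.mem_union] at hv ⊢
    omega
  refine (Set.ncard_le_ncard hsub (Set.toFinite _)).trans ((Set.ncard_union_le _ _).trans ?_)
  refine add_le_add ((Set.ncard_union_le _ _).trans (add_le_add ?_ ?_)) ?_
  · have h := Set.ncard_le_ncard_of_injOn
      (s := {v : Fin m × Fin n | (1 ≤ v.1.val ∧ v.1.val ≤ 5 * p ∧ 1 ≤ v.2.val ∧ v.2.val ≤ 5 * q) ∧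
          ((v.1.val : ℤ) + 2 * (v.2.val : ℤ) - t) % 5 = 0})
      (t := ((Finset.range p ×ˢ Finset.range (5 * q) : Finset (ℕ × ℕ)) : Set (ℕ × ℕ)))
      (fun v => ((v.1.val - 1) / 5, v.2.val - 1))
      (by
        rintro ⟨x, y⟩ hv
        simp only [Set.mem_ofPred_eq, Finset.coe_product, Finset.coe_range, Set.mem_prod,
          Set.mem_Iio] at hv ⊢
        omega)
      (by
        rintro ⟨x, y⟩ hv ⟨z, w⟩ hw h
        simp only [Set.mem_ofPred_eq, Prod.mk.injEq] at hv hw h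
        refine Prod.ext (Fin.ext ?_) (Fin.ext ?_) <;> dsimp only <;> omega)
      (Finset.finite_toSet _)
    rwa [Set.ncard_coe_finset, Finset.card_product, Finset.card_range, Finset.card_range] at h
  · have h := Set.ncard_le_ncard_of_injOn
      (s := {v : Fin m × Fin n | v.1.val = 0 ∨ 5 * p < v.1.val})
      (t := ((Finset.range 6 ×ˢ Finset.range n : Finset (ℕ × ℕ)) : Set (ℕ × ℕ)))
      (fun v => (v.1.val - 5 * p, v.2.val))
      (by
        rintro ⟨x, y⟩ hv
        simp only [Set.mem_ofPred_eq, Finset.coe_product, Finset.coe_range, Set.mem_prod,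
          Set.mem_Iio] at hv ⊢
        omega)
      (by
        rintro ⟨x, y⟩ hv ⟨z, w⟩ hw h
        simp only [Set.mem_ofPred_eq, Prod.mk.injEq] at hv hw h
        refine Prod.ext (Fin.ext ?_) (Fin.ext ?_) <;> dsimp only <;> omega)
      (Finset.finite_toSet _)
    rwa [Set.ncard_coe_finset, Finset.card_product, Finset.card_range, Finset.card_range] at h
  · have h := Set.ncard_le_ncard_of_injOn
      (s := {v : Fin m × Fin n | v.2.val = 0 ∨ 5 * q < v.2.val})
      (t := ((Finset.range m ×ˢ Finset.range 6 : Finset (ℕ × ℕ)) : Set (ℕ × ℕ)))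
      (fun v => (v.1.val, v.2.val - 5 * q))
      (by
        rintro ⟨x, y⟩ hv
        simp only [Set.mem_ofPred_eq, Finset.coe_product, Finset.coe_range, Set.mem_prod,
          Set.mem_Iio] at hv ⊢
        omega)
      (by
        rintro ⟨x, y⟩ hv ⟨z, w⟩ hw h
        simp only [Set.mem_ofPred_eq, Prod.mk.injEq] at hv hw h
        refine Prod.ext (Fin.ext ?_) (Fin.ext ?_) <;> dsimp only <;> omega)
      (Finset.finite_toSet _)
    rwa [Set.ncard_coe_finset, Finset.card_product, Finset.card_range, Finset.card_range] at h

theorem ncard_confA_eq_confB {m n : ℕ} {p q : ℤ} (hp : 1 ≤ p) (hq : 1 ≤ q) (hm : 5 * p + 2 ≤ m)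
    (hn : 5 * q + 2 ≤ n) (t s : ℤ) : (confA m n p q t).ncard = (confB m n p q s).ncard := by
  obtain ⟨σ, -, hσ, -⟩ := exists_exchange hp hq hm hn t s
  rw [← hσ.image_eq, hσ.injOn.ncard_image]

end EternalGrid

open EternalGrid in
/-- General upper bound: there is a constant `C` such that for all `m, n ≥ 7` the
grid `P_m □ P_n` admits an eternal dominating family whose members share a common
cardinality `k` with `5k ≤ mn + C(m+n)`; consequently
`γ^∞(P_m □ P_n) ≤ mn/5 + O(m+n)`. -/
theorem eternal_domination_general_bound :
    ∃ C : ℕ, ∀ m n : ℕ, 7 ≤ m → 7 ≤ n →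
      ∃ k : ℕ,
        (∃ 𝒮 : Set (Set (Fin m × Fin n)),
          EternalDominatingFamily m n 𝒮 ∧ ∀ S ∈ 𝒮, S.ncard = k) ∧
        5 * k ≤ m * n + C * (m + n) := by
  refine ⟨30, fun m n hm7 hn7 => ?_⟩
  obtain ⟨p, hp⟩ : ∃ p : ℕ, p = (m - 2) / 5 := ⟨_, rfl⟩
  obtain ⟨q, hq⟩ : ∃ q : ℕ, q = (n - 2) / 5 := ⟨_, rfl⟩
  have hp1 : (1 : ℤ) ≤ p := by omega
  have hq1 : (1 : ℤ) ≤ q := by omega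
  have hm : 5 * (p : ℤ) + 2 ≤ m := by omega
  have hn : 5 * (q : ℤ) + 2 ≤ n := by omega
  refine ⟨(confA m n p q 0).ncard, ⟨{S | ∃ t, S = confA m n p q t ∨ S = confB m n p q t},
    ⟨⟨_, 0, Or.inl rfl⟩, ?_, ?_⟩, ?_⟩, ?_⟩
  · rintro _ ⟨t, rfl | rfl⟩
    · exact confA_dominating hm hn t
    · exact confB_dominating hm hn t
  · rintro _ ⟨t, rfl | rfl⟩ v -
    · obtain ⟨σ, -, hσ, -, hnear, -⟩ :=
        exists_exchange hp1 hq1 hm hn t ((toLattice v).1 - 2 * (toLattice v).2)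
      exact ⟨_, ⟨_, Or.inr rfl⟩, Or.inr (by omega), σ, hσ, fun w _ => hnear w⟩
    · obtain ⟨-, τ, -, hτ, -, hnear⟩ :=
        exists_exchange hp1 hq1 hm hn ((toLattice v).1 + 2 * (toLattice v).2) t
      exact ⟨_, ⟨_, Or.inl rfl⟩, Or.inr (by omega), τ, hτ, fun w _ => hnear w⟩
  · rintro _ ⟨t, rfl | rfl⟩
    · rw [ncard_confA_eq_confB hp1 hq1 hm hn t 0, ← ncard_confA_eq_confB hp1 hq1 hm hn 0 0]
    · exact (ncard_confA_eq_confB hp1 hq1 hm hn 0 t).symm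
  · have h := ncard_confA_le (m := m) (n := n) (p := p) (q := q) (by omega) (by omega) 0
    have hmn : 5 * p * (5 * q) ≤ m * n := Nat.mul_le_mul (by omega) (by omega)
    linarith
end
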